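/- arXiv:2511.18426 — 3 statements merged into one kernel-verified Lean document; each statement's English description precedes it below -/
import Mathlib

section
/- Let f be a squarefree polynomial in two variables over the complex numbers with zero constant term, and let R = ℂ[x,y]/(f). Then the R-linear map R → R ⊕ R sending g to (g·((∂f/∂x) mod (f)), g·((∂f/∂y) mod (f))) is injective. -/
open MvPolynomial

/-!
Suppose `f ∣ g * ∂ᵢf` for all `i`. As `f` is squarefree, `f ∣ g` follows once every prime factor
`p` of `f` divides `g`, so it is enough that `p` fails to divide some `∂ᵢf`. Writing `f = p * h`
with `p ∤ h`, the Leibniz rule shows that `p ∣ ∂ᵢf` forces `p ∣ ∂ᵢp`, hence `∂ᵢp = 0` by degree.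
In characteristic zero this cannot happen for all `i`, as `p` would then be constant.
-/

theorem dvd_of_squarefree_of_forall_prime_dvd {M : Type*} [CommMonoidWithZero M]
    [UniqueFactorizationMonoid M] {f g : M} (hf : Squarefree f)
    (hg : ∀ p, Prime p → p ∣ f → p ∣ g) : f ∣ g := by
  induction f using UniqueFactorizationMonoid.induction_on_prime with
  | h₁ => exact (hf 0 (dvd_zero _)).dvd
  | h₂ u hu => exact hu.dvd
  | h₃ a p _ hp ih =>
    have hpg : p ∣ g := hg p hp (dvd_mul_right p a)
    have hag : a ∣ g := ih hf.of_mul_right fun q hq hqa ↦ hg q hq (hqa.mul_left p)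
    exact (IsRelPrime.of_squarefree_mul hf).mul_dvd hpg hag

theorem dvd_derivation_of_dvd_of_squarefree {R A : Type*} [CommSemiring R] [CommRing A]
    [Algebra R A] (D : Derivation R A A) {f p : A} (hf : Squarefree f) (hp : Prime p)
    (hpf : p ∣ f) (hpD : p ∣ D f) : p ∣ D p := by
  obtain ⟨h, rfl⟩ := hpf
  have hph : ¬p ∣ h := fun hdvd ↦ hp.not_isUnit (hf p (mul_dvd_mul_left p hdvd))
  have hpDp : p ∣ h * D p := by
    rwa [D.leibniz, smul_eq_mul, smul_eq_mul, dvd_add_right (dvd_mul_right _ _)] at hpD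
  exact (hp.dvd_or_dvd hpDp).resolve_left hph

section PartialDerivatives

variable {σ R : Type*}

theorem totalDegree_pderiv_lt [CommSemiring R] {p : MvPolynomial σ R} {i : σ}
    (hp : pderiv i p ≠ 0) : (pderiv i p).totalDegree < p.totalDegree := by
  obtain ⟨m, hm, hdeg⟩ := Finset.exists_mem_eq_sup _ (support_nonempty.2 hp)
    fun m : σ →₀ ℕ ↦ m.sum fun _ e ↦ e
  have hmem : m + Finsupp.single i 1 ∈ p.support := by
    rw [mem_support_iff, coeff_pderiv] at hm
    exact mem_support_iff.2 (left_ne_zero_of_mul hm)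
  calc (pderiv i p).totalDegree
      = m.sum fun _ e ↦ e := hdeg
    _ < (m + Finsupp.single i 1).sum fun _ e ↦ e := by
      rw [Finsupp.sum_add_index' (by simp) (by simp), Finsupp.sum_single_index rfl]
      exact Nat.lt_succ_self _
    _ ≤ p.totalDegree := le_totalDegree hmem

theorem pderiv_eq_zero_of_dvd_pderiv [CommSemiring R] [NoZeroDivisors R] {p : MvPolynomial σ R}
    {i : σ} (h : p ∣ pderiv i p) : pderiv i p = 0 := by
  by_contra hne
  exact (totalDegree_le_of_dvd_of_isDomain h hne).not_gt (totalDegree_pderiv_lt hne)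

theorem eq_C_constantCoeff_of_forall_pderiv_eq_zero [CommRing R] [IsAddTorsionFree R]
    {p : MvPolynomial σ R} (h : ∀ i, pderiv i p = 0) : p = C (constantCoeff p) := by
  apply MvPolynomial.coe_injective
  refine MvPowerSeries.pderiv.ext (fun i ↦ ?_) ?_
  · rw [MvPowerSeries.pderiv_coe, MvPowerSeries.pderiv_coe, h, pderiv_C]
  · rw [coe_C, MvPowerSeries.constantCoeff_C]
    exact coeff_coe p 0

variable {K : Type*} [Field K] [CharZero K]

theorem exists_not_dvd_pderiv_of_prime {p : MvPolynomial σ K} (hp : Prime p) :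
    ∃ i, ¬p ∣ pderiv i p := by
  by_contra! hdvd
  have hconst : p = C (constantCoeff p) :=
    eq_C_constantCoeff_of_forall_pderiv_eq_zero fun i ↦ pderiv_eq_zero_of_dvd_pderiv (hdvd i)
  have hne : constantCoeff p ≠ 0 := fun h0 ↦ hp.ne_zero (by rw [hconst, h0, C_0])
  exact hp.not_isUnit (hconst ▸ hne.isUnit.map C)

theorem dvd_of_squarefree_of_forall_dvd_mul_pderiv {f g : MvPolynomial σ K} (hf : Squarefree f)
    (hg : ∀ i, f ∣ g * pderiv i f) : f ∣ g := by
  refine dvd_of_squarefree_of_forall_prime_dvd hf fun p hp hpf ↦ ?_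
  obtain ⟨i, hpi⟩ := exists_not_dvd_pderiv_of_prime hp
  have hpDf : ¬p ∣ pderiv i f := mt (dvd_derivation_of_dvd_of_squarefree _ hf hp hpf) hpi
  exact (hp.dvd_or_dvd (hpf.trans (hg i))).resolve_right hpDf

theorem conormal_injective_general {f : MvPolynomial σ K} (hf : Squarefree f) :
    Function.Injective fun (g : MvPolynomial σ K ⧸ Ideal.span {f}) (i : σ) ↦
      g * Ideal.Quotient.mk (Ideal.span {f}) (pderiv i f) := by
  intro a b hab
  obtain ⟨a, rfl⟩ := Ideal.Quotient.mk_surjective a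
  obtain ⟨b, rfl⟩ := Ideal.Quotient.mk_surjective b
  rw [Ideal.Quotient.eq, Ideal.mem_span_singleton]
  refine dvd_of_squarefree_of_forall_dvd_mul_pderiv hf fun i ↦ ?_
  rw [sub_mul, ← Ideal.mem_span_singleton, ← Ideal.Quotient.eq, map_mul, map_mul]
  exact congrFun hab i

end PartialDerivatives

/-- For a squarefree `f ∈ ℂ[x,y]` with zero constant term and `R = ℂ[x,y]/(f)`,
the `R`-linear map `R → R ⊕ R`, `g ↦ (g·∂_x f, g·∂_y f)`, is injective
(left-exactness of the conormal sequence in the proof of Lemma 2.5). -/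
theorem conormal_injective (f : MvPolynomial (Fin 2) ℂ) (hf : Squarefree f)
    (h0 : constantCoeff f = 0) :
    Function.Injective (fun g : MvPolynomial (Fin 2) ℂ ⧸ Ideal.span {f} =>
      ((g * Ideal.Quotient.mk (Ideal.span {f}) (pderiv 0 f),
        g * Ideal.Quotient.mk (Ideal.span {f}) (pderiv 1 f)) :
        (MvPolynomial (Fin 2) ℂ ⧸ Ideal.span {f}) × (MvPolynomial (Fin 2) ℂ ⧸ Ideal.span {f}))) := by
  intro a b hab
  exact conormal_injective_general hf (funext (Fin.forall_fin_two.2 (Prod.mk.inj hab)))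
end

section
/- Let f be a squarefree polynomial in two variables over the complex numbers with zero constant term, and let R = ℂ[x,y]/(f). Then the first Ext group Ext¹_R(Ω_{R/ℂ}, R), computed in the category of R-modules, is isomorphic as an abelian group to the quotient ring R/((∂f/∂x) mod (f), (∂f/∂y) mod (f)), i.e. to ℂ[x,y]/(f, ∂f/∂x, ∂f/∂y). -/
open MvPolynomial CategoryTheory

/-!
Write `A = k[xᵢ]` and `R = A/(f)`. The conormal sequence presents `Ω_R` as the cokernel of
`R → R ⊗ Ω_A`, `1 ↦ df`. This map is injective: if `f` divides `g ∂ᵢf` for all `i`, then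
`q = f / gcd(f, g)` divides every `∂ᵢq`, so `∂ᵢq = 0` by degree; as `k` is perfect, `q` is a
constant or a `p`-th power, hence a unit because `f` is squarefree, i.e. `f` divides `g`. Therefore
`0 → R → R ⊗ Ω_A → Ω_R → 0` is a free resolution of `Ω_R`, and `Ext¹(Ω_R, R)` is the quotient of `R`
by the ideal of values `φ(df)` of linear forms `φ` on `R ⊗ Ω_A`, which is generated by the
coordinates `∂ᵢf` of `df`.
-/

universe w v u

section PartialDerivatives

variable {σ k : Type*}

theorem totalDegree_pderiv_lt_s2 [CommSemiring k] {f : MvPolynomial σ k} {i : σ}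
    (hf : pderiv i f ≠ 0) : (pderiv i f).totalDegree < f.totalDegree := by
  obtain ⟨m, hm, hdeg⟩ := Finset.exists_mem_eq_sup _ (support_nonempty.2 hf) Finsupp.degree
  have hm' : m + Finsupp.single i 1 ∈ f.support := by
    rw [mem_support_iff, coeff_pderiv] at hm
    exact mem_support_iff.2 (left_ne_zero_of_mul hm)
  calc (pderiv i f).totalDegree = m.degree := hdeg
    _ < (m + Finsupp.single i 1).degree := by simp
    _ ≤ f.totalDegree := le_totalDegree hm'

theorem pderiv_eq_zero_of_dvd [CommRing k] [IsDomain k] {f : MvPolynomial σ k} {i : σ}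
    (h : f ∣ pderiv i f) : pderiv i f = 0 := by
  by_contra hne
  obtain ⟨g, hg⟩ := h
  have hfg : f * g ≠ 0 := hg ▸ hne
  have hlt := totalDegree_pderiv_lt_s2 hne
  rw [hg, totalDegree_mul_of_isDomain (left_ne_zero_of_mul hfg) (right_ne_zero_of_mul hfg)] at hlt
  exact hlt.not_ge le_self_add

theorem dvd_of_mem_support_of_pderiv_eq_zero [CommSemiring k] [NoZeroDivisors k]
    (p : ℕ) [CharP k p] {f : MvPolynomial σ k} {i : σ} (hf : pderiv i f = 0)
    {m : σ →₀ ℕ} (hm : m ∈ f.support) : p ∣ m i := by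
  rcases Nat.eq_zero_or_pos (m i) with hi | hi
  · simp [hi]
  have hle : Finsupp.single i 1 ≤ m := by simpa [Nat.one_le_iff_ne_zero] using hi.ne'
  have hcoeff := coeff_pderiv (i := i) f (m - Finsupp.single i 1)
  rw [hf, coeff_zero, tsub_add_cancel_of_le hle, eq_comm, mul_eq_zero] at hcoeff
  rw [← CharP.cast_eq_zero_iff k p, ← Nat.sub_add_cancel hi]
  simpa using hcoeff.resolve_left (mem_support_iff.1 hm)

theorem exists_expand_eq_of_pderiv_eq_zero [CommSemiring k] [NoZeroDivisors k] (p : ℕ) [CharP k p]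
    {f : MvPolynomial σ k} (hf : ∀ i, pderiv i f = 0) : ∃ g, expand p g = f := by
  suffices f ∈ (expand p).range from this
  rw [f.as_sum]
  refine sum_mem fun m hm => ⟨monomial (m.mapRange (· / p) (Nat.zero_div p)) (coeff m f), ?_⟩
  have hdiv : p • m.mapRange (· / p) (Nat.zero_div p) = m :=
    Finsupp.ext fun i => Nat.mul_div_cancel' (dvd_of_mem_support_of_pderiv_eq_zero p (hf i) hm)
  exact (expand_monomial _ _ _).trans (by rw [hdiv])

theorem exists_expand_eq_pow [CommSemiring k] (p : ℕ) [ExpChar k p] [PerfectRing k p]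
    (f : MvPolynomial σ k) : ∃ g, expand p f = g ^ p := by
  obtain ⟨g, rfl⟩ := map_surjective (frobenius k p) (surjective_frobenius k p) f
  exact ⟨g, by rw [← map_expand, map_frobenius_expand]⟩

theorem isUnit_of_squarefree_of_pderiv_eq_zero [Field k] [PerfectField k] {f : MvPolynomial σ k}
    (hsq : Squarefree f) (hf : ∀ i, pderiv i f = 0) : IsUnit f := by
  obtain ⟨p, _⟩ := CharP.exists k
  obtain ⟨g, rfl⟩ := exists_expand_eq_of_pderiv_eq_zero p hf
  rcases CharP.char_is_prime_or_zero k p with hp | rfl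
  · have : Fact p.Prime := ⟨hp⟩
    have : PerfectRing k p := PerfectField.toPerfectRing p
    obtain ⟨r, hr⟩ := exists_expand_eq_pow p g
    rw [hr] at hsq ⊢
    by_contra hu
    rcases hsq.eq_zero_or_one_of_pow_of_not_isUnit (mt (IsUnit.pow p) hu) with h | h
    exacts [hp.ne_zero h, hp.ne_one h]
  · rw [expand_zero_apply] at hsq ⊢
    exact (isUnit_iff_ne_zero.2 (ne_zero_of_map hsq.ne_zero)).map C

theorem dvd_of_forall_dvd_mul_pderiv [Field k] [PerfectField k] {f g : MvPolynomial σ k}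
    (hf : Squarefree f) (h : ∀ i, f ∣ g * pderiv i f) : f ∣ g := by
  obtain ⟨q, r, d, hqr, rfl, rfl⟩ :=
    UniqueFactorizationMonoid.exists_reduced_factors f hf.ne_zero g
  obtain ⟨hdq, -, hq⟩ := squarefree_mul_iff.1 hf
  have hd : d ≠ 0 := left_ne_zero_of_mul hf.ne_zero
  refine mul_dvd_mul_left d (isUnit_of_squarefree_of_pderiv_eq_zero hq fun i => ?_).dvd
  -- Cancelling `d`, and then the factor `r` coprime to `q`, in `d * q ∣ d * r * ∂ᵢ(d * q)`.
  have hq_dvd : q ∣ d * pderiv i q + q * pderiv i d := by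
    have hi := h i
    rw [mul_assoc, mul_dvd_mul_iff_left hd] at hi
    simpa using hqr.dvd_of_dvd_mul_left hi
  rw [dvd_add_left (dvd_mul_right _ _)] at hq_dvd
  exact pderiv_eq_zero_of_dvd (hdq.symm.dvd_of_dvd_mul_left hq_dvd)

end PartialDerivatives

section Ext

variable {C : Type u} [Category.{v} C] [Abelian C]

/-- The length-one projective resolution `0 → X₁ → X₂` of `X₃` given by a short exact sequence
`0 → X₁ → X₂ → X₃ → 0` with `X₁` and `X₂` projective. The complex is built as the augmentation of
`X₁`, concentrated in degree `0`, by `X₂`. -/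
noncomputable def projectiveResolutionOfShortExact {S : ShortComplex C} (hS : S.ShortExact)
    [Projective S.X₁] [Projective S.X₂] : ProjectiveResolution S.X₃ where
  complex := ((ChainComplex.single₀ C).obj S.X₁).augment S.f Limits.zero_comp
  projective
    | 0 => ‹Projective S.X₂›
    | n + 1 => (ProjectiveResolution.self S.X₁).projective n
  π := (ChainComplex.toSingle₀Equiv _ _).symm ⟨S.g, S.zero⟩
  quasiIso := ⟨fun n => by
    cases n with
    | zero =>
      have hπ := ChainComplex.toSingle₀Equiv_symm_apply_f_zero
        (C := ((ChainComplex.single₀ C).obj S.X₁).augment S.f Limits.zero_comp) S.g S.zero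
      rw [ChainComplex.quasiIsoAt₀_iff, ShortComplex.quasiIso_iff_of_zeros' _ rfl rfl rfl]
      refine (ShortComplex.exact_and_epi_g_iff_of_iso ?_).2 ⟨hS.exact, hS.epi_g⟩
      refine ShortComplex.isoMk (Iso.refl _) (Iso.refl _) (Iso.refl _) ?_ ?_
      · exact (Category.id_comp _).trans (Category.comp_id _).symm
      · exact (Category.id_comp _).trans ((Category.comp_id _).trans hπ).symm
    | succ n =>
      rw [quasiIsoAt_iff_exactAt' _ _ (ChainComplex.exactAt_succ_single_obj _ _),
        HomologicalComplex.exactAt_iff' _ (n + 2) (n + 1) n (by simp) (by simp)]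
      cases n with
      | zero => exact (ShortComplex.exact_iff_mono _ rfl).2 hS.mono_f
      | succ n =>
        exact ShortComplex.exact_of_isZero_X₂ _
          (HomologicalComplex.isZero_single_obj_X (.down ℕ) 0 S.X₁ (n + 1) (by simp))⟩

/-- `Ext¹(X₃, Y)` as the cokernel of `Hom(X₂, Y) → Hom(X₁, Y)`, for a short exact sequence
`0 → X₁ → X₂ → X₃ → 0` with `X₁` and `X₂` projective. -/
noncomputable def extOneEquivOfShortExact (R : Type w) [Ring R] [Linear R C] [EnoughProjectives C]
    {S : ShortComplex C} (hS : S.ShortExact) [Projective S.X₁] [Projective S.X₂] (Y : C) :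
    ((Ext R C 1).obj (Opposite.op S.X₃)).obj Y ≃ₗ[R]
      (S.X₁ ⟶ Y) ⧸ (Linear.leftComp R Y S.f).range :=
  let P := projectiveResolutionOfShortExact hS
  let K := P.complex.linearYonedaObj R Y
  have hd : K.d 1 2 = 0 := ModuleCat.hom_ext (LinearMap.ext fun _ => Limits.zero_comp)
  (P.isoExt 1 Y ≪≫ K.isoHomologyι 1 2 (by simp) hd ≪≫
    (K.opcyclesIsCokernel 0 1 (by simp)).coconePointUniqueUpToIso
      (ModuleCat.cokernelIsColimit (K.d 0 1))).toLinearEquiv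

end Ext

section Modules

theorem range_dualEval_eq_span_range_repr {R F ι : Type*} [CommSemiring R] [AddCommMonoid F]
    [Module R F] (b : Module.Basis ι R F) (v : F) :
    (Module.Dual.eval R F v).range = Ideal.span (Set.range (b.repr v)) := by
  apply le_antisymm
  · rintro _ ⟨φ, rfl⟩
    have hφ := congrArg φ (b.linearCombination_repr v)
    rw [Finsupp.apply_linearCombination] at hφ
    rw [Module.Dual.eval_apply, ← hφ]
    exact sum_mem fun i _ => Ideal.mul_mem_right _ _ (Ideal.subset_span ⟨i, rfl⟩)
  · rw [Ideal.span_le]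
    rintro _ ⟨i, rfl⟩
    exact ⟨b.coord i, rfl⟩

variable {R : Type u} [CommRing R] {F : Type u} [AddCommGroup F] [Module R F]

theorem map_range_leftComp_toSpanSingleton (v : F) :
    (Linear.leftComp R (ModuleCat.of R R)
        (ModuleCat.ofHom (LinearMap.toSpanSingleton R F v))).range.map
      (ModuleCat.homLinearEquiv (S := R) ≪≫ₗ LinearMap.ringLmapEquivSelf R R R).toLinearMap =
    (Module.Dual.eval R F v).range := by
  ext r
  constructor
  · rintro ⟨_, ⟨φ, rfl⟩, rfl⟩
    exact ⟨φ.hom, (congrArg φ.hom (one_smul R v)).symm⟩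
  · rintro ⟨φ, rfl⟩
    exact ⟨_, ⟨ModuleCat.ofHom φ, rfl⟩, congrArg φ (one_smul R v)⟩

/-- `Ext¹(M, R)` for a module `M` presented by one relation `v` in a projective module `F`, where
`v` has trivial annihilator: the quotient of `R` by the ideal of values at `v` of linear forms. -/
noncomputable def extOneSelfEquivOfExact {M : Type u} [AddCommGroup M] [Module R M]
    [Module.Projective R F] {v : F} {π : F →ₗ[R] M}
    (hinj : Function.Injective (LinearMap.toSpanSingleton R F v))
    (hexact : Function.Exact (LinearMap.toSpanSingleton R F v) π)
    (hsurj : Function.Surjective π) :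
    ((Ext R (ModuleCat.{u} R) 1).obj (Opposite.op (ModuleCat.of R M))).obj (ModuleCat.of R R)
      ≃ₗ[R] R ⧸ (Module.Dual.eval R F v).range :=
  let S := ShortComplex.moduleCatMk _ _ hexact.linearMap_comp_eq_zero
  have hS : S.ShortExact := ModuleCat.shortComplex_shortExact S hexact hinj hsurj
  have : Projective S.X₁ := (IsProjective.iff_projective R).1 inferInstance
  have : Projective S.X₂ := (IsProjective.iff_projective F).1 inferInstance
  (extOneEquivOfShortExact R hS (ModuleCat.of R R)).trans
    (Submodule.Quotient.equiv _ _ _ (map_range_leftComp_toSpanSingleton v))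

end Modules

section Kaehler

open KaehlerDifferential
open scoped TensorProduct

theorem exact_toSpanSingleton_D_mapBaseChange (k : Type*) {A B : Type*} [CommRing k] [CommRing A]
    [CommRing B] [Algebra k A] [Algebra k B] [Algebra A B] [IsScalarTower k A B] {f : A}
    (hsurj : Function.Surjective (algebraMap A B))
    (hker : RingHom.ker (algebraMap A B) = Ideal.span {f}) :
    Function.Exact (LinearMap.toSpanSingleton B (B ⊗[A] Ω[A⁄k]) (1 ⊗ₜ D k A f))
      (mapBaseChange k A B) := by
  have hf : algebraMap A B f = 0 := by
    rw [← RingHom.mem_ker, hker]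
    exact Ideal.mem_span_singleton_self f
  intro x
  rw [exact_kerCotangentToTensor_mapBaseChange k A B hsurj x]
  constructor
  · rintro ⟨c, rfl⟩
    obtain ⟨⟨y, hy⟩, rfl⟩ := Ideal.toCotangent_surjective _ c
    obtain ⟨a, rfl⟩ := Ideal.mem_span_singleton'.1 (hker ▸ hy)
    have hf_smul : f • (1 : B) ⊗ₜ[A] D k A a = 0 := by rw [← algebraMap_smul B f, hf, zero_smul]
    exact ⟨algebraMap A B a, by simp [TensorProduct.tmul_add, hf_smul]⟩
  · rintro ⟨b, rfl⟩
    obtain ⟨a, rfl⟩ := hsurj b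
    exact ⟨a • Ideal.toCotangent _ ⟨f, hf⟩, by simp⟩

theorem mvPolynomialBasis_baseChange_repr_D {σ k : Type*} (B : Type*) [CommRing k] [CommRing B]
    [Algebra (MvPolynomial σ k) B] (f : MvPolynomial σ k) (i : σ) :
    ((mvPolynomialBasis k σ).baseChange B).repr (1 ⊗ₜ D k _ f) i =
      algebraMap (MvPolynomial σ k) B (pderiv i f) := by
  rw [Module.Basis.baseChange_repr_tmul, mvPolynomialBasis_repr_apply,
    Algebra.algebraMap_eq_smul_one]

theorem range_dualEval_D_eq_map_span_pderiv {σ k : Type*} [CommRing k] (f : MvPolynomial σ k) :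
    (Module.Dual.eval (MvPolynomial σ k ⧸ Ideal.span {f})
      ((MvPolynomial σ k ⧸ Ideal.span {f}) ⊗[MvPolynomial σ k] Ω[MvPolynomial σ k⁄k])
      (1 ⊗ₜ D k _ f)).range =
    (Ideal.span (Set.range fun i => pderiv i f)).map (Ideal.Quotient.mk (Ideal.span {f})) := by
  rw [range_dualEval_eq_span_range_repr ((mvPolynomialBasis k σ).baseChange _), Ideal.map_span,
    ← Set.range_comp]
  congr 2
  exact funext fun i => mvPolynomialBasis_baseChange_repr_D _ f i

variable {σ : Type v} {k : Type u} [Field k] [PerfectField k]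

theorem injective_toSpanSingleton_D {f : MvPolynomial σ k} (hf : Squarefree f) :
    Function.Injective (LinearMap.toSpanSingleton (MvPolynomial σ k ⧸ Ideal.span {f})
      ((MvPolynomial σ k ⧸ Ideal.span {f}) ⊗[MvPolynomial σ k] Ω[MvPolynomial σ k⁄k])
      (1 ⊗ₜ D k _ f)) := by
  rw [injective_iff_map_eq_zero]
  intro r hr
  obtain ⟨g, rfl⟩ := Ideal.Quotient.mk_surjective r
  rw [Ideal.Quotient.eq_zero_iff_dvd]
  refine dvd_of_forall_dvd_mul_pderiv hf fun i => ?_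
  have hcoord := congrArg (((mvPolynomialBasis k σ).baseChange _).coord i) hr
  rw [LinearMap.toSpanSingleton_apply, map_smul, map_zero, Module.Basis.coord_apply,
    mvPolynomialBasis_baseChange_repr_D] at hcoord
  rwa [← Ideal.Quotient.eq_zero_iff_dvd, map_mul]

/-- For a squarefree polynomial `f` over a perfect field and `R = k[xᵢ]/(f)`, the `R`-linear
identification of `Ext¹(Ω_R, R)` with the quotient of `R` by the Jacobian ideal of `f`. -/
noncomputable def extOneKaehlerEquiv {f : MvPolynomial σ k} (hf : Squarefree f) :
    ((Ext (MvPolynomial σ k ⧸ Ideal.span {f})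
          (ModuleCat.{max u v} (MvPolynomial σ k ⧸ Ideal.span {f})) 1).obj
        (Opposite.op (ModuleCat.of (MvPolynomial σ k ⧸ Ideal.span {f})
          Ω[MvPolynomial σ k ⧸ Ideal.span {f}⁄k]))).obj
      (ModuleCat.of (MvPolynomial σ k ⧸ Ideal.span {f}) (MvPolynomial σ k ⧸ Ideal.span {f}))
    ≃ₗ[MvPolynomial σ k ⧸ Ideal.span {f}] (MvPolynomial σ k ⧸ Ideal.span {f}) ⧸
      (Ideal.span (Set.range fun i => pderiv i f)).map (Ideal.Quotient.mk (Ideal.span {f})) :=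
  have := Module.Projective.of_basis
    ((mvPolynomialBasis k σ).baseChange (MvPolynomial σ k ⧸ Ideal.span {f}))
  extOneSelfEquivOfExact (injective_toSpanSingleton_D hf)
      (exact_toSpanSingleton_D_mapBaseChange k Ideal.Quotient.mk_surjective Ideal.mk_ker)
      (mapBaseChange_surjective k _ _ Ideal.Quotient.mk_surjective) ≪≫ₗ
    Submodule.quotEquivOfEq _ _ (range_dualEval_D_eq_map_span_pderiv f)

theorem ext_one_kaehler_general (f : MvPolynomial σ k) (hf : Squarefree f) :
    Nonempty (
      (((Ext (MvPolynomial σ k ⧸ Ideal.span {f})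
            (ModuleCat.{max u v} (MvPolynomial σ k ⧸ Ideal.span {f})) 1).obj
          (Opposite.op (ModuleCat.of (MvPolynomial σ k ⧸ Ideal.span {f})
            Ω[MvPolynomial σ k ⧸ Ideal.span {f}⁄k]))).obj
        (ModuleCat.of (MvPolynomial σ k ⧸ Ideal.span {f}) (MvPolynomial σ k ⧸ Ideal.span {f})))
      ≃+ (MvPolynomial σ k ⧸ Ideal.span (insert f (Set.range fun i => pderiv i f)))) := by
  rw [Ideal.span_insert]
  exact ⟨(extOneKaehlerEquiv hf).toAddEquiv.trans (DoubleQuot.quotQuotEquivQuotSup _ _).toAddEquiv⟩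

end Kaehler

/-- For a squarefree `f ∈ ℂ[x,y]` with zero constant term and `R = ℂ[x,y]/(f)`,
`Ext¹_R(Ω_{R/ℂ}, R) ≅ ℂ[x,y]/(f, ∂_x f, ∂_y f)` as abelian groups
(the key computation in the proof of Lemma 2.5). -/
theorem ext_one_kaehler (f : MvPolynomial (Fin 2) ℂ) (hf : Squarefree f)
    (h0 : constantCoeff f = 0) :
    Nonempty (
      (((Ext (MvPolynomial (Fin 2) ℂ ⧸ Ideal.span {f})
            (ModuleCat (MvPolynomial (Fin 2) ℂ ⧸ Ideal.span {f})) 1).obj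
          (Opposite.op (ModuleCat.of (MvPolynomial (Fin 2) ℂ ⧸ Ideal.span {f})
            (KaehlerDifferential ℂ (MvPolynomial (Fin 2) ℂ ⧸ Ideal.span {f}))))).obj
        (ModuleCat.of (MvPolynomial (Fin 2) ℂ ⧸ Ideal.span {f})
          (MvPolynomial (Fin 2) ℂ ⧸ Ideal.span {f})))
      ≃+ (MvPolynomial (Fin 2) ℂ ⧸ Ideal.span {f, pderiv 0 f, pderiv 1 f})) := by
  have hext := ext_one_kaehler_general f hf
  rwa [Fin.range_fin_succ, Set.range_unique] at hext
end

section
/- Let f be a polynomial in two variables over ℂ with zero constant term and let F be its image in the formal power series ring ℂ[[x,y]]. Suppose that F = u · g₁ ⋯ g_r, where u is a unit of ℂ[[x,y]], r ≥ 1, each g_i is irreducible in ℂ[[x,y]], and g_i and g_j are non-associated for i ≠ j. Then the Milnor number, the δ-invariant, and the number r of irreducible (formal) factors satisfy μ(f) = 2δ(f) − r + 1. -/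
open MvPolynomial

set_option synthInstance.maxHeartbeats 1000000
set_option maxHeartbeats 2000000

/-- The local ring `R = ℂ[[x,y]]/(F)`, where `F` is the image in `ℂ[[x,y]]` of `f ∈ ℂ[x,y]`. -/
def CurveGermRing (f : MvPolynomial (Fin 2) ℂ) : Type :=
  MvPowerSeries (Fin 2) ℂ ⧸ Ideal.span {(↑f : MvPowerSeries (Fin 2) ℂ)}

noncomputable instance (f : MvPolynomial (Fin 2) ℂ) : CommRing (CurveGermRing f) :=
  inferInstanceAs
    (CommRing (MvPowerSeries (Fin 2) ℂ ⧸ Ideal.span {(↑f : MvPowerSeries (Fin 2) ℂ)}))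

noncomputable instance (f : MvPolynomial (Fin 2) ℂ) : Algebra ℂ (CurveGermRing f) :=
  inferInstanceAs
    (Algebra ℂ (MvPowerSeries (Fin 2) ℂ ⧸ Ideal.span {(↑f : MvPowerSeries (Fin 2) ℂ)}))

/-- The Milnor number `μ(f) = dim_ℂ ℂ[[x,y]]/(∂f/∂x, ∂f/∂y)`. -/
noncomputable def milnorNumber (f : MvPolynomial (Fin 2) ℂ) : ℕ :=
  Module.finrank ℂ
    (MvPowerSeries (Fin 2) ℂ ⧸ Ideal.span
      {(↑(pderiv 0 f) : MvPowerSeries (Fin 2) ℂ), (↑(pderiv 1 f) : MvPowerSeries (Fin 2) ℂ)})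

/-- The δ-invariant `δ(f) = dim_ℂ (O̅ / R)`, where `O̅` is the normalization of `R`, i.e. the
integral closure of `R = ℂ[[x,y]]/(F)` in its total ring of fractions `K`, and the quotient is
by the canonical image of `R` in `O̅`. -/
noncomputable def deltaInvariant (f : MvPolynomial (Fin 2) ℂ) (K : Type) [CommRing K]
    [Algebra (CurveGermRing f) K] [Algebra ℂ K] [IsScalarTower ℂ (CurveGermRing f) K] : ℕ :=
  Module.finrank ℂ
    ((integralClosure (CurveGermRing f) K) ⧸
      LinearMap.range (Algebra.linearMap (CurveGermRing f) (integralClosure (CurveGermRing f) K)))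

/-!
The ring `k⟦x, y⟧` is treated as `k⟦x⟧⟦y⟧`, in linear coordinates chosen so that no branch of the
curve is the axis `x = 0`. Write `i (F, G) = dim k⟦x, y⟧ / (F, G)`.

* By Newton–Puiseux, a branch `g = 0` is parametrized by `x = t ^ N`, `y = ρ (t)`, and `k⟦t⟧` is its
  normalization. The image of `k⟦x, y⟧` in `k⟦t⟧` is spanned over `k⟦t ^ N⟧` by
  `1, ρ, …, ρ ^ (N - 1)`; comparing the Vandermonde determinants of the conjugates of `ρ`
  and of `t` gives `i (g, ∂g/∂y) = 2 δ (g) + i (g, x) - 1`.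
* For distinct branches, `δ` of the union exceeds the sum of the `δ (g_i)` by
  `∑_{i < j} i (g_i, g_j)`, so that the product `F` of `r` branches satisfies
  `i (F, ∂F/∂y) = 2 δ (F) + i (F, x) - r`.
* Teissier's lemma: along a branch of the polar curve `∂F/∂y = 0`, the chain rule reads
  `d F (x (t), y (t)) / dt = ∂F/∂x · dx/dt`. Taking orders and summing over the branches gives
  `i (F, ∂F/∂y) = i (∂F/∂x, ∂F/∂y) + i (F, x) - 1`.

Comparing the last two formulas eliminates `i (F, x)`.
-/

namespace PlaneCurve

open scoped Polynomial PowerSeries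

/-! ### Colength -/

section Colength

variable (k : Type*) {R M M' : Type*} [Ring k] [AddCommGroup M] [Module k M] [AddCommGroup M']
  [Module k M']

/-- The length over `k` of the quotient of `M` by a submodule `N`, with value `⊤` if this length
is infinite. The submodule may be taken over an algebra over `k`, such as an ideal. -/
noncomputable def colength [Ring R] [Module R M] [SMul k R] [IsScalarTower k R M]
    (N : Submodule R M) : ℕ∞ :=
  Module.length k (M ⧸ N)

theorem colength_restrictScalars [Ring R] [Module R M] [SMul k R] [IsScalarTower k R M]
    (N : Submodule R M) : colength k (N.restrictScalars k) = colength k N :=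
  (Submodule.Quotient.restrictScalarsEquiv k N).length_eq

theorem colength_top : colength k (⊤ : Submodule k M) = 0 :=
  Module.length_eq_zero_iff.2 (Submodule.Quotient.subsingleton_iff.2 rfl)

theorem colength_antitone [Ring R] [Module R M] [SMul k R] [IsScalarTower k R M] :
    Antitone (colength k : Submodule R M → ℕ∞) := fun _ _ h ↦
  Module.length_le_of_surjective ((Submodule.factor h).restrictScalars k)
    (Submodule.factor_surjective h)

variable {k}

theorem colength_eq_add (f : M →ₗ[k] M') (N : Submodule k M') :
    colength k N = colength k (N.comap f) + colength k (N ⊔ f.range) := by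
  refine Module.length_eq_add_of_exact (Submodule.mapQ (N.comap f) N f le_rfl)
    (Submodule.factor le_sup_left) ?_ (Submodule.factor_surjective _) ?_
  · rw [← LinearMap.ker_eq_bot, Submodule.ker_mapQ, Submodule.mkQ_map_self]
  · rw [LinearMap.exact_iff, Submodule.range_mapQ, Submodule.factor, Submodule.ker_mapQ,
      Submodule.comap_id, Submodule.map_sup, Submodule.mkQ_map_self, bot_sup_eq]

theorem colength_comap_of_surjective {f : M →ₗ[k] M'} (hf : Function.Surjective f)
    (N : Submodule k M') : colength k (N.comap f) = colength k N := by
  rw [colength_eq_add f N, LinearMap.range_eq_top.2 hf, sup_top_eq, colength_top, add_zero]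

theorem colength_map_of_injective {f : M →ₗ[k] M'} (hf : Function.Injective f)
    (N : Submodule k M) : colength k (N.map f) = colength k N + colength k f.range := by
  rw [colength_eq_add f (N.map f), Submodule.comap_map_eq_of_injective hf,
    sup_eq_right.2 LinearMap.map_le_range]

end Colength

section PrincipalColength

variable {k R : Type*} [CommRing k] [CommRing R] [Algebra k R]

theorem colength_span_singleton_mul {a : R} (ha : a ∈ nonZeroDivisors R) (b : R) :
    colength k (Ideal.span {a * b}) =
      colength k (Ideal.span {a}) + colength k (Ideal.span {b}) := by
  have hinj : Function.Injective (LinearMap.mulLeft k a) := fun x y h ↦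
    (mul_cancel_left_mem_nonZeroDivisors ha).1 h
  have hrange : (Ideal.span {a}).restrictScalars k = (LinearMap.mulLeft k a).range := by
    ext t
    simp [Ideal.mem_span_singleton', mul_comm a]
  have hmap : (Ideal.span {a * b}).restrictScalars k =
      ((Ideal.span {b}).restrictScalars k).map (LinearMap.mulLeft k a) := by
    ext t
    simp [Ideal.mem_span_singleton', mul_left_comm a]
  rw [← colength_restrictScalars, hmap, colength_map_of_injective hinj, ← hrange,
    colength_restrictScalars, colength_restrictScalars, add_comm]

theorem colength_span_singleton_prod [IsDomain R] {ι : Type*} (s : Finset ι) {a : ι → R}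
    (ha : ∀ i ∈ s, a i ≠ 0) :
    colength k (Ideal.span {∏ i ∈ s, a i}) = ∑ i ∈ s, colength k (Ideal.span {a i}) := by
  classical
  induction s using Finset.induction_on with
  | empty =>
    rw [Finset.prod_empty, Finset.sum_empty, Ideal.span_singleton_one, ← colength_top k (M := R)]
    exact (colength_restrictScalars k ⊤).symm
  | insert i s hi ih =>
    rw [Finset.prod_insert hi, Finset.sum_insert hi, colength_span_singleton_mul
      (mem_nonZeroDivisors_of_ne_zero (ha i (Finset.mem_insert_self i s))),
      ih fun j hj ↦ ha j (Finset.mem_insert_of_mem hj)]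

section SmithNormalForm

variable [IsDomain R] [IsPrincipalIdealRing R] {M ι : Type*} [AddCommGroup M] [Module R M]
  [Fintype ι]

theorem associated_det_prod_smithNormalFormCoeffs {f : M →ₗ[R] M} (hf : Function.Injective f)
    (b : Module.Basis ι R M) (h : Module.finrank R f.range = Module.finrank R M) :
    Associated f.det (∏ i, Submodule.smithNormalFormCoeffs b h i) := by
  classical
  set a := Submodule.smithNormalFormCoeffs b h
  let bM := Submodule.smithNormalFormTopBasis b h
  let E := LinearEquiv.ofInjective f hf
  let bN := (Submodule.smithNormalFormBotBasis b h).map E.symm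
  have hfb (i : ι) : f (bN i) = a i • bM i := by
    rw [← Submodule.smithNormalFormBotBasis_def, ← LinearEquiv.ofInjective_apply f (h := hf)]
    simp [bN, E]
  have hdiag : f ∘ₗ (bM.equiv bN (Equiv.refl ι)).toLinearMap =
      Matrix.toLin bM bM (Matrix.diagonal a) := by
    refine bM.ext fun i ↦ ?_
    simp [hfb, Matrix.toLin_self, Matrix.diagonal_apply]
  have hdet : (f ∘ₗ (bM.equiv bN (Equiv.refl ι)).toLinearMap).det = ∏ i, a i := by
    rw [hdiag, LinearMap.det_toLin, Matrix.det_diagonal]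
  rw [← hdet]
  exact LinearMap.associated_det_comp_equiv f (LinearEquiv.refl R M) _

theorem colength_range_toLin' [DecidableEq ι] {A : Matrix ι ι R} (hA : A.det ≠ 0) :
    colength k (Matrix.toLin' A).range = colength k (Ideal.span {A.det}) := by
  have hinj : Function.Injective (Matrix.toLin' A) := Matrix.mulVec_injective_of_det_ne_zero hA
  have h := LinearMap.finrank_range_of_inj hinj
  have hassoc := associated_det_prod_smithNormalFormCoeffs hinj (Pi.basisFun R ι) h
  rw [LinearMap.det_toLin'] at hassoc
  rw [Ideal.span_singleton_eq_span_singleton.2 hassoc, colength_span_singleton_prod _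
    fun i _ ↦ Submodule.smithNormalFormCoeffs_ne_zero (Pi.basisFun R ι) h i, colength,
    ((Submodule.quotientEquivPiSpan _ (Pi.basisFun R ι) h).restrictScalars k).length_eq,
    Module.length_pi_of_fintype]
  rfl

end SmithNormalForm

end PrincipalColength

section IntersectionNumber

variable (k : Type*) {T : Type*} [CommRing k] [CommRing T] [Algebra k T]

/-- The intersection number `dim T / (F, G)` of two elements of a `k`-algebra `T`, with value `⊤`
if this dimension is infinite. -/
noncomputable def intersectionNumber (F G : T) : ℕ∞ :=
  colength k (Ideal.span {F, G})

theorem intersectionNumber_comm (F G : T) :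
    intersectionNumber k F G = intersectionNumber k G F := by
  rw [intersectionNumber, Set.pair_comm, intersectionNumber]

theorem intersectionNumber_eq_of_associated {F F' : T} (h : Associated F F') (G : T) :
    intersectionNumber k F G = intersectionNumber k F' G := by
  obtain ⟨u, rfl⟩ := h
  rw [intersectionNumber, intersectionNumber, Ideal.span_insert, Ideal.span_insert,
    Ideal.span_singleton_mul_right_unit u.isUnit]

theorem intersectionNumber_isUnit {F : T} (h : IsUnit F) (G : T) :
    intersectionNumber k F G = 0 := by
  rw [intersectionNumber, Ideal.eq_top_of_isUnit_mem _ (Ideal.subset_span (Set.mem_insert F {G})) h,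
    ← colength_restrictScalars]
  exact colength_top k

variable {k}

theorem intersectionNumber_mul_left [IsDomain T] {a c : T} (ha : Prime a) (hac : ¬ a ∣ c) (b : T) :
    intersectionNumber k (a * b) c = intersectionNumber k a c + intersectionNumber k b c := by
  have hsup : (Ideal.span {a * b, c}).restrictScalars k ⊔ (LinearMap.mulLeft k a).range =
      (Ideal.span {a, c}).restrictScalars k := by
    ext t
    simp only [Submodule.mem_sup, Submodule.restrictScalars_mem, Ideal.mem_span_pair,
      LinearMap.mem_range, LinearMap.mulLeft_apply]
    constructor
    · rintro ⟨_, ⟨p, q, rfl⟩, _, ⟨s, rfl⟩, rfl⟩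
      exact ⟨p * b + s, q, by ring⟩
    · rintro ⟨p, q, rfl⟩
      exact ⟨q * c, ⟨0, q, by ring⟩, a * p, ⟨p, rfl⟩, by ring⟩
  have hcomap : ((Ideal.span {a * b, c}).restrictScalars k).comap (LinearMap.mulLeft k a) =
      (Ideal.span {b, c}).restrictScalars k := by
    ext t
    simp only [Submodule.mem_comap, Submodule.restrictScalars_mem, Ideal.mem_span_pair,
      LinearMap.mulLeft_apply]
    constructor
    · rintro ⟨p, q, h⟩
      have hdvd : a ∣ q * c := ⟨t - p * b, by linear_combination h⟩
      obtain ⟨q, rfl⟩ := (ha.dvd_or_dvd hdvd).resolve_right hac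
      exact ⟨p, q, mul_left_cancel₀ ha.ne_zero (by linear_combination h)⟩
    · rintro ⟨p, q, rfl⟩
      exact ⟨p, a * q, by ring⟩
  simp only [intersectionNumber]
  rw [← colength_restrictScalars, colength_eq_add (LinearMap.mulLeft k a), hcomap, hsup,
    colength_restrictScalars, colength_restrictScalars, add_comm]

theorem intersectionNumber_map {S : Type*} [CommRing S] [Algebra k S] (e : T ≃ₐ[k] S) (F G : T) :
    intersectionNumber k (e F) (e G) = intersectionNumber k F G := by
  have hcomap : ((Ideal.span {e F, e G}).restrictScalars k).comap e.toLinearMap =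
      (Ideal.span {F, G}).restrictScalars k := by
    have hmap : Ideal.map e (Ideal.span {F, G}) = Ideal.span {e F, e G} := by
      rw [Ideal.map_span, Set.image_pair]
    ext t
    simp [← hmap, Ideal.mem_map_of_equiv]
  rw [intersectionNumber, ← colength_restrictScalars,
    ← colength_comap_of_surjective (f := e.toLinearMap) e.surjective, hcomap,
    colength_restrictScalars, intersectionNumber]

end IntersectionNumber

/-! ### Power series in one variable -/

section Order

variable {k : Type*} [Field k]

theorem associated_X_pow_order {c : k⟦X⟧} (hc : c ≠ 0) :
    Associated (PowerSeries.X ^ c.order.toNat) c :=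
  ⟨(PowerSeries.isUnit_divided_by_X_pow_order hc).unit, PowerSeries.X_pow_order_mul_divXPowOrder⟩

theorem X_pow_dvd_iff_le_order {R : Type*} [CommRing R] {n : ℕ} {c : R⟦X⟧} :
    PowerSeries.X ^ n ∣ c ↔ (n : ℕ∞) ≤ c.order := by
  rw [PowerSeries.X_pow_dvd_iff]
  exact ⟨PowerSeries.nat_le_order c n, fun h i hi ↦
    PowerSeries.coeff_of_lt_order i ((Nat.cast_lt.2 hi).trans_le h)⟩

theorem colength_span_X : colength k (Ideal.span {(PowerSeries.X : k⟦X⟧)}) = 1 := by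
  have hker : (Ideal.span {(PowerSeries.X : k⟦X⟧)}).restrictScalars k =
      (⊥ : Submodule k k).comap (PowerSeries.coeff (R := k) 0) := by
    ext t
    simp [Ideal.mem_span_singleton, PowerSeries.X_dvd_iff]
  have hsurj : Function.Surjective (PowerSeries.coeff (R := k) 0) := fun a ↦
    ⟨PowerSeries.C a, by simp⟩
  rw [← colength_restrictScalars, hker, colength_comap_of_surjective hsurj, colength,
    (Submodule.quotEquivOfEqBot _ rfl).length_eq, Module.length_eq_one]

theorem colength_span_X_pow (n : ℕ) :
    colength k (Ideal.span {(PowerSeries.X : k⟦X⟧) ^ n}) = n := by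
  have h := colength_span_singleton_prod (k := k) (Finset.range n)
    (a := fun _ ↦ (PowerSeries.X : k⟦X⟧)) fun _ _ ↦ PowerSeries.X_ne_zero
  simpa [colength_span_X] using h

theorem colength_span_singleton (c : k⟦X⟧) : colength k (Ideal.span {c}) = c.order := by
  by_cases hc : c = 0
  · rw [hc, PowerSeries.order_zero, eq_top_iff]
    refine ENat.forall_natCast_le_iff_le.1 fun n _ ↦ ?_
    rw [← colength_span_X_pow (k := k) n]
    exact colength_antitone k ((Ideal.span_singleton_le_span_singleton).2 (dvd_zero _))
  · rw [← Ideal.span_singleton_eq_span_singleton.2 (associated_X_pow_order hc),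
      colength_span_X_pow, ENat.natCast_toNat (PowerSeries.order_eq_top.not.2 hc)]

theorem derivative_mul {A : Type*} [CommRing A] (f g : A⟦X⟧) :
    PowerSeries.derivative A (f * g) =
      f * PowerSeries.derivative A g + g * PowerSeries.derivative A f :=
  Derivation.leibniz _ f g

theorem map_derivative {A B : Type*} [CommRing A] [CommRing B] (f : A →+* B) (G : A⟦X⟧) :
    (PowerSeries.derivative A G).map f = PowerSeries.derivative B (G.map f) := by
  ext n
  simp [PowerSeries.coeff_derivative]

theorem order_eq_order_derivative_add_one [CharZero k] {c : k⟦X⟧}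
    (hc : PowerSeries.constantCoeff c = 0) :
    c.order = (PowerSeries.derivative k c).order + 1 := by
  obtain hzero | hzero := eq_or_ne c 0
  · simp [hzero]
  obtain ⟨n, hn⟩ := ENat.ne_top_iff_exists.1 (PowerSeries.order_eq_top.not.2 hzero)
  obtain ⟨hcoeff, hlt⟩ := PowerSeries.order_eq_nat.1 hn.symm
  obtain _ | n := n
  · exact absurd (by simpa using hc) hcoeff
  have hderiv : (PowerSeries.derivative k c).order = n := by
    refine PowerSeries.order_eq_nat.2 ⟨?_, fun i hi ↦ ?_⟩
    · rw [PowerSeries.coeff_derivative]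
      exact mul_ne_zero hcoeff (by exact_mod_cast n.succ_ne_zero)
    · rw [PowerSeries.coeff_derivative, hlt _ (by omega), zero_mul]
  rw [hderiv, ← hn, Nat.cast_succ]

theorem order_rescale {a : k} (ha : a ≠ 0) (c : k⟦X⟧) :
    (PowerSeries.rescale a c).order = c.order := by
  have hle (a : k) (c : k⟦X⟧) : c.order ≤ (PowerSeries.rescale a c).order :=
    PowerSeries.le_order _ _ fun i hi ↦ by
      rw [PowerSeries.coeff_rescale, PowerSeries.coeff_of_lt_order i hi, mul_zero]
  refine le_antisymm ((hle a⁻¹ _).trans_eq ?_) (hle a c)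
  rw [PowerSeries.rescale_rescale, mul_inv_cancel₀ ha, PowerSeries.rescale_one, RingHom.id_apply]

theorem two_mul_order_det_vandermonde {R : Type*} [CommRing R] [IsDomain R] {n : ℕ}
    (v : Fin n → R⟦X⟧) :
    2 * (Matrix.vandermonde v).det.order =
      ∑ i, ∑ j ∈ Finset.univ.erase i, (v i - v j).order := by
  have hsplit (i : Fin n) : ∑ j ∈ Finset.univ.erase i, (v i - v j).order =
      ∑ j ∈ Finset.Iio i, (v i - v j).order + ∑ j ∈ Finset.Ioi i, (v j - v i).order := by
    have hunion : Finset.univ.erase i = Finset.Iio i ∪ Finset.Ioi i := by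
      ext j
      simp
    have hdisj : Disjoint (Finset.Iio i) (Finset.Ioi i) :=
      Finset.disjoint_left.2 fun j hj hj' ↦ lt_asymm (Finset.mem_Iio.1 hj) (Finset.mem_Ioi.1 hj')
    rw [hunion, Finset.sum_union hdisj]
    simp only [← PowerSeries.order_neg (v i - _), neg_sub]
  have hswap : ∑ i, ∑ j ∈ Finset.Iio i, (v i - v j).order =
      ∑ i, ∑ j ∈ Finset.Ioi i, (v j - v i).order :=
    Finset.sum_comm' (by simp)
  simp only [hsplit, Finset.sum_add_distrib, hswap, Matrix.det_vandermonde,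
    PowerSeries.order_prod, two_mul]

end Order

section Expand

variable {R : Type*} [CommRing R] {N : ℕ} (hN : N ≠ 0)

/-- The substitution `X ↦ X ^ N` of power series as a ring homomorphism, in the form needed by
`Polynomial.map` and `Polynomial.eval₂`. -/
noncomputable abbrev expandHom : R⟦X⟧ →+* R⟦X⟧ :=
  (PowerSeries.expand N hN : R⟦X⟧ →ₐ[R] R⟦X⟧).toRingHom

theorem expandHom_injective : Function.Injective (expandHom (R := R) hN) := fun a b h ↦ by
  ext n
  rw [← PowerSeries.coeff_expand_mul N hN a]
  exact (congrArg _ h).trans (PowerSeries.coeff_expand_mul N hN b n)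

theorem expandHom_comp {M : ℕ} (hM : M ≠ 0) :
    (expandHom hN).comp (expandHom hM) = expandHom (R := R) (mul_ne_zero hN hM) :=
  RingHom.ext fun a ↦ (PowerSeries.expand_mul N hN M hM a).symm

theorem rescale_expandHom {z : R} (hz : z ^ N = 1) (a : R⟦X⟧) :
    PowerSeries.rescale z (expandHom hN a) = expandHom hN a := by
  ext n
  rw [PowerSeries.coeff_rescale]
  by_cases h : N ∣ n
  · obtain ⟨m, rfl⟩ := h
    rw [pow_mul, hz, one_pow, one_mul]
  · rw [show PowerSeries.coeff n (expandHom hN a) = 0 from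
      PowerSeries.coeff_expand_of_not_dvd N hN a h, mul_zero]

theorem mem_range_expandHom [IsDomain R] {z : R} (hz : IsPrimitiveRoot z N) {c : R⟦X⟧}
    (hc : PowerSeries.rescale z c = c) : c ∈ (expandHom hN).range := by
  refine ⟨PowerSeries.mk fun n ↦ PowerSeries.coeff (N * n) c, ?_⟩
  ext n
  change PowerSeries.coeff n (PowerSeries.expand N hN _) = _
  rw [PowerSeries.coeff_expand]
  split_ifs with hdvd
  · rw [PowerSeries.coeff_mk, Nat.mul_div_cancel' hdvd]
  · have hcoeff : z ^ n * PowerSeries.coeff n c = PowerSeries.coeff n c := by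
      rw [← PowerSeries.coeff_rescale, hc]
    by_contra hne
    exact hdvd (hz.dvd_of_pow_eq_one n (mul_right_cancel₀ (Ne.symm hne) (by rw [hcoeff, one_mul])))

theorem coeff_sum_expand_mul_X_pow (v : Fin N → R⟦X⟧) (i : Fin N) (n : ℕ) :
    PowerSeries.coeff (n * N + i) (∑ j, expandHom hN (v j) * PowerSeries.X ^ (j : ℕ)) =
      PowerSeries.coeff n (v i) := by
  rw [map_sum, Finset.sum_eq_single i]
  · rw [PowerSeries.coeff_mul_X_pow, mul_comm]
    exact PowerSeries.coeff_expand_mul N hN (v i) n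
  · intro j _ hji
    rw [PowerSeries.coeff_mul_X_pow']
    split_ifs with hle
    · refine PowerSeries.coeff_expand_of_not_dvd N hN _ fun ⟨m, hm⟩ ↦ hji (Fin.ext ?_)
      have hmod : (m * N + j) % N = (n * N + i) % N := by
        rw [mul_comm m, ← hm, Nat.sub_add_cancel hle]
      simpa [Nat.mod_eq_of_lt i.2, Nat.mod_eq_of_lt j.2] using hmod
    · rfl
  · simp

/-- `R⟦X⟧` is free over `R⟦X ^ N⟧` with basis `1, X, …, X ^ (N - 1)`. -/
noncomputable def residueDecomposition : (Fin N → R⟦X⟧) ≃ₗ[R] R⟦X⟧ where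
  toFun v := ∑ i, expandHom hN (v i) * PowerSeries.X ^ (i : ℕ)
  map_add' v w := by simp [add_mul, Finset.sum_add_distrib]
  map_smul' a v := by simp [Finset.smul_sum]
  invFun c i := PowerSeries.mk fun n ↦ PowerSeries.coeff (n * N + i) c
  left_inv v := by
    ext i n
    rw [PowerSeries.coeff_mk, coeff_sum_expand_mul_X_pow]
  right_inv c := by
    ext n
    obtain ⟨q, i, rfl⟩ : ∃ q, ∃ i : Fin N, n = q * N + i :=
      ⟨n / N, ⟨n % N, Nat.mod_lt n (Nat.pos_of_ne_zero hN)⟩, (Nat.div_add_mod' n N).symm⟩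
    rw [coeff_sum_expand_mul_X_pow, PowerSeries.coeff_mk]

theorem residueDecomposition_apply (v : Fin N → R⟦X⟧) :
    residueDecomposition hN v = ∑ i, expandHom hN (v i) * PowerSeries.X ^ (i : ℕ) :=
  rfl

end Expand

/-! ### Weierstrass preparation -/

section Distinguished

variable {A : Type*} [CommRing A] {I : Ideal A} [IsAdicComplete I A] {W : A[X]}

theorem dvd_of_coe_dvd_coe (hW : W.IsDistinguishedAt I) {P : A[X]}
    (h : (W : A⟦X⟧) ∣ (P : A⟦X⟧)) : W ∣ P := by
  rw [← Ideal.mem_span_singleton, ← Ideal.Quotient.eq_zero_iff_mem] at h ⊢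
  exact (map_eq_zero_iff hW.algEquivQuotient hW.algEquivQuotient.injective).1 h

theorem exists_coe_dvd_sub_coe [Nontrivial A] (hW : W.IsDistinguishedAt I) (G : A⟦X⟧) :
    ∃ P : A[X], P.degree < W.degree ∧ (W : A⟦X⟧) ∣ G - P := by
  obtain ⟨p, hp⟩ := hW.algEquivQuotient.surjective (Ideal.Quotient.mk _ G)
  obtain ⟨P, rfl⟩ := Ideal.Quotient.mk_surjective p
  have hdvd : (W : A⟦X⟧) ∣ P - G := by
    rw [← Ideal.mem_span_singleton, ← Ideal.Quotient.eq]
    exact hp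
  refine ⟨P %ₘ W, P.degree_modByMonic_lt hW.monic, ?_⟩
  have hP : (P : A⟦X⟧) = (P %ₘ W : A[X]) + W * (P /ₘ W : A[X]) := by
    rw [← Polynomial.coe_mul, ← Polynomial.coe_add, P.modByMonic_add_div W]
  have hsplit : G - ((P %ₘ W : A[X]) : A⟦X⟧) = W * ((P /ₘ W : A[X]) : A⟦X⟧) - (P - G) := by
    rw [hP]
    ring
  rw [hsplit]
  exact dvd_sub (dvd_mul_right _ _) hdvd

theorem irreducible_of_irreducible_coe [IsDomain A] (hW : W.IsDistinguishedAt I)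
    (h : Irreducible (W : A⟦X⟧)) : Irreducible W := by
  have hunit {P Q : A[X]} (hPQ : W = P * Q) (hP : IsUnit (P : A⟦X⟧)) : IsUnit P := by
    obtain ⟨R, rfl⟩ : W ∣ Q := dvd_of_coe_dvd_coe hW <| by
      rw [hPQ, Polynomial.coe_mul]
      exact hP.mul_left_dvd.2 dvd_rfl
    refine IsUnit.of_mul_eq_one R (mul_left_cancel₀ hW.monic.ne_zero ?_)
    rw [mul_one, mul_left_comm, ← hPQ]
  refine ⟨fun hWunit ↦ h.not_isUnit (hWunit.map Polynomial.coeToPowerSeries.ringHom),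
    fun {P Q} hPQ ↦ ?_⟩
  exact (h.isUnit_or_isUnit (by rw [hPQ, Polynomial.coe_mul])).imp (hunit hPQ)
    (hunit (hPQ.trans (mul_comm P Q)))

end Distinguished

section Preparation

variable {k : Type*} [Field k]

open IsLocalRing (maximalIdeal residue)

instance : IsAdicComplete (maximalIdeal k⟦X⟧) k⟦X⟧ := by
  rw [PowerSeries.maximalIdeal_eq_span_X]
  infer_instance

theorem mem_maximalIdeal_iff_constantCoeff_eq_zero {a : k⟦X⟧} :
    a ∈ maximalIdeal k⟦X⟧ ↔ PowerSeries.constantCoeff a = 0 := by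
  rw [PowerSeries.maximalIdeal_eq_span_X, Ideal.mem_span_singleton, PowerSeries.X_dvd_iff]

theorem isDistinguishedAt_iff {V : k⟦X⟧[X]} :
    V.IsDistinguishedAt (maximalIdeal k⟦X⟧) ↔
      V.Monic ∧ V.map PowerSeries.constantCoeff = Polynomial.X ^ V.natDegree := by
  refine ⟨fun h ↦ ⟨h.monic, ?_⟩, fun ⟨hmonic, hmap⟩ ↦ ⟨⟨fun {i} hi ↦ ?_⟩, hmonic⟩⟩
  · ext i
    rw [Polynomial.coeff_map, Polynomial.coeff_X_pow]
    obtain hi | rfl | hi := lt_trichotomy i V.natDegree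
    · rw [if_neg hi.ne, ← mem_maximalIdeal_iff_constantCoeff_eq_zero]
      exact h.mem hi
    · rw [if_pos rfl, h.monic.coeff_natDegree, map_one]
    · rw [if_neg hi.ne', Polynomial.coeff_eq_zero_of_natDegree_lt hi, map_zero]
  · rw [mem_maximalIdeal_iff_constantCoeff_eq_zero, ← Polynomial.coeff_map, hmap,
      Polynomial.coeff_X_pow, if_neg hi.ne]

theorem order_map_residue (G : k⟦X⟧⟦X⟧) :
    (G.map (residue k⟦X⟧)).order = (G.map PowerSeries.constantCoeff).order := by
  have hker (a : k⟦X⟧) : residue k⟦X⟧ a = 0 ↔ PowerSeries.constantCoeff a = 0 := by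
    rw [IsLocalRing.residue_eq_zero_iff, mem_maximalIdeal_iff_constantCoeff_eq_zero]
  refine le_antisymm ?_ ?_ <;>
  · refine PowerSeries.le_order _ _ fun i hi ↦ ?_
    simpa [hker] using PowerSeries.coeff_of_lt_order i hi

theorem exists_isDistinguishedAt_associated {G : k⟦X⟧⟦X⟧}
    (hG : G.map PowerSeries.constantCoeff ≠ 0) :
    ∃ W : k⟦X⟧[X], W.IsDistinguishedAt (maximalIdeal k⟦X⟧) ∧
      (W.natDegree : ℕ∞) = (G.map PowerSeries.constantCoeff).order ∧
      Associated (W : k⟦X⟧⟦X⟧) G := by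
  have horder : (G.map (residue k⟦X⟧)).order ≠ ⊤ := by
    rwa [order_map_residue, Ne, PowerSeries.order_eq_top]
  obtain ⟨W, h, hWh⟩ :=
    PowerSeries.exists_isWeierstrassFactorization (PowerSeries.order_eq_top.not.1 horder)
  refine ⟨W, hWh.isDistinguishedAt, ?_, hWh.isUnit.unit, hWh.eq_mul.symm⟩
  rw [PowerSeries.IsWeierstrassFactorization.natDegree_eq_toNat_order_map hWh,
    ENat.natCast_toNat horder, order_map_residue]

end Preparation

/-! ### Newton–Puiseux theorem -/

section PolynomialShape

variable {A : Type*} [CommRing A]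

theorem nextCoeff_comp_X_add_C {P : A[X]} (hP : P.Monic) (s : A) :
    (P.comp (Polynomial.X + Polynomial.C s)).nextCoeff = P.nextCoeff + P.natDegree * s := by
  have hdeg : (P.comp (Polynomial.X + Polynomial.C s)).natDegree = P.natDegree := by
    rw [← Polynomial.taylor_apply, Polynomial.natDegree_taylor]
  obtain hzero | ⟨n, hn⟩ : P.natDegree = 0 ∨ ∃ n, P.natDegree = n + 1 := by
    cases P.natDegree <;> simp
  · simp [Polynomial.nextCoeff, hdeg, hzero]
  have hderiv : Polynomial.hasseDeriv n P =
      Polynomial.C (P.coeff n) + Polynomial.C ((n + 1 : ℕ) : A) * Polynomial.X := by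
    ext m
    rw [Polynomial.hasseDeriv_coeff, Polynomial.coeff_add, Polynomial.coeff_C,
      Polynomial.coeff_C_mul, Polynomial.coeff_X]
    match m with
    | 0 => simp
    | 1 =>
      have hlead : P.coeff (n + 1) = 1 := by rw [← hn, hP.coeff_natDegree]
      simp [hlead, add_comm]
    | m + 2 =>
      rw [Polynomial.coeff_eq_zero_of_natDegree_lt (by omega)]
      simp
  rw [Polynomial.nextCoeff_of_natDegree_pos (by omega),
    Polynomial.nextCoeff_of_natDegree_pos (by omega), hdeg, hn, Nat.add_sub_cancel,
    ← Polynomial.taylor_apply, Polynomial.taylor_coeff, hderiv]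
  simp

theorem nextCoeff_scaleRoots (P : A[X]) (s : A) :
    (P.scaleRoots s).nextCoeff = P.nextCoeff * s := by
  simp only [Polynomial.nextCoeff, Polynomial.natDegree_scaleRoots, Polynomial.coeff_scaleRoots]
  split_ifs with h
  · rw [zero_mul]
  · rw [Nat.sub_sub_self (Nat.one_le_iff_ne_zero.2 h), pow_one]

theorem exists_scaleRoots_eq {P : A[X]} {s : A}
    (h : ∀ i, s ^ (P.natDegree - i) ∣ P.coeff i) : ∃ Q : A[X], Q.scaleRoots s = P := by
  choose b hb using h
  let Q : A[X] := ∑ i ∈ Finset.range (P.natDegree + 1), Polynomial.monomial i (b i)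
  have hbQ (i : ℕ) (hi : P.natDegree ≤ i) : b i = P.coeff i := by
    rw [hb i, Nat.sub_eq_zero_of_le hi, pow_zero, one_mul]
  have hcoeff (i : ℕ) : Q.coeff i = b i := by
    simp only [Q, Polynomial.finsetSum_coeff, Polynomial.coeff_monomial, Finset.sum_ite_eq',
      Finset.mem_range]
    split_ifs with hi
    · rfl
    · rw [hbQ i (by omega), Polynomial.coeff_eq_zero_of_natDegree_lt (by omega)]
  have hdeg : Q.natDegree = P.natDegree := by
    refine le_antisymm (Polynomial.natDegree_le_iff_coeff_eq_zero.2 fun i hi ↦ ?_) ?_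
    · rw [hcoeff, hbQ i hi.le, Polynomial.coeff_eq_zero_of_natDegree_lt hi]
    · obtain h | h := eq_or_ne P 0
      · simp [h]
      · refine Polynomial.le_natDegree_of_ne_zero ?_
        rw [hcoeff, hbQ _ le_rfl]
        exact Polynomial.leadingCoeff_ne_zero.2 h
  refine ⟨Q, Polynomial.ext fun i ↦ ?_⟩
  rw [Polynomial.coeff_scaleRoots, hcoeff, hdeg, hb i, mul_comm]

end PolynomialShape

/-- The polynomial `V` over `k⟦x⟧` has a root in `k⟦x ^ (1 / N)⟧` for some `N`. The root is recorded
as a power series `ρ` in `t = x ^ (1 / N)`. -/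
def HasPuiseuxRoot {R : Type*} [CommRing R] (V : R⟦X⟧[X]) : Prop :=
  ∃ (N : ℕ) (hN : N ≠ 0) (ρ : R⟦X⟧), V.eval₂ (expandHom hN) ρ = 0

namespace HasPuiseuxRoot

variable {R : Type*} [CommRing R] {V W : R⟦X⟧[X]}

theorem of_dvd (h : HasPuiseuxRoot W) (hWV : W ∣ V) : HasPuiseuxRoot V := by
  obtain ⟨N, hN, ρ, hρ⟩ := h
  exact ⟨N, hN, ρ, Polynomial.eval₂_eq_zero_of_dvd_of_eval₂_eq_zero _ _ hWV hρ⟩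

theorem of_comp_X_add_C {s : R⟦X⟧}
    (h : HasPuiseuxRoot (V.comp (Polynomial.X + Polynomial.C s))) : HasPuiseuxRoot V := by
  obtain ⟨N, hN, ρ, hρ⟩ := h
  rw [Polynomial.eval₂_comp] at hρ
  exact ⟨N, hN, _, hρ⟩

theorem scaleRoots (h : HasPuiseuxRoot V) (s : R⟦X⟧) : HasPuiseuxRoot (V.scaleRoots s) := by
  obtain ⟨N, hN, ρ, hρ⟩ := h
  exact ⟨N, hN, _, Polynomial.scaleRoots_eval₂_eq_zero _ hρ⟩

theorem of_map_expandHom {M : ℕ} {hM : M ≠ 0} (h : HasPuiseuxRoot (V.map (expandHom hM))) :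
    HasPuiseuxRoot V := by
  obtain ⟨N, hN, ρ, hρ⟩ := h
  rw [Polynomial.eval₂_map, expandHom_comp] at hρ
  exact ⟨N * M, _, ρ, hρ⟩

end HasPuiseuxRoot

section NewtonPuiseux

variable {k : Type*} [Field k]

theorem exists_monic_dvd_comp_X_add_C {V : k⟦X⟧[X]} (hV : V.Monic) {c : k}
    (hc : (V.map PowerSeries.constantCoeff).IsRoot c)
    (hpow : V.map PowerSeries.constantCoeff ≠ (Polynomial.X - Polynomial.C c) ^ V.natDegree) :
    ∃ W : k⟦X⟧[X], W.Monic ∧ W.natDegree ≠ 0 ∧ W.natDegree < V.natDegree ∧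
      W ∣ V.comp (Polynomial.X + Polynomial.C (PowerSeries.C c)) := by
  set U := V.comp (Polynomial.X + Polynomial.C (PowerSeries.C c)) with hUdef
  have hU : U.Monic := hV.comp_X_add_C _
  have hUdeg : U.natDegree = V.natDegree := by
    rw [hUdef, Polynomial.natDegree_comp, Polynomial.natDegree_X_add_C, mul_one]
  have hUmap : U.map PowerSeries.constantCoeff =
      (V.map PowerSeries.constantCoeff).comp (Polynomial.X + Polynomial.C c) := by
    simp [hUdef, Polynomial.map_comp]
  have hUne : (U : k⟦X⟧⟦X⟧).map PowerSeries.constantCoeff ≠ 0 := by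
    rw [← Polynomial.polynomial_map_coe]
    exact Polynomial.coe_eq_zero_iff.not.2 (hU.map _).ne_zero
  obtain ⟨W, hW, hWdeg, hWU⟩ := exists_isDistinguishedAt_associated hUne
  have hdvd : W ∣ U := dvd_of_coe_dvd_coe hW hWU.dvd
  refine ⟨W, hW.monic, fun h ↦ ?_, ?_, hdvd⟩
  · have hzero : PowerSeries.constantCoeff ((U : k⟦X⟧⟦X⟧).map PowerSeries.constantCoeff) = 0 := by
      rw [← Polynomial.polynomial_map_coe, hUmap, Polynomial.constantCoeff_coe,
        Polynomial.coeff_zero_eq_eval_zero, Polynomial.eval_comp]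
      simpa using hc
    rw [h] at hWdeg
    exact PowerSeries.order_ne_zero_iff_constCoeff_eq_zero.2 hzero (by exact_mod_cast hWdeg.symm)
  · refine lt_of_le_of_ne (hUdeg ▸ Polynomial.natDegree_le_of_dvd hdvd hU.ne_zero) fun h ↦ hpow ?_
    have hWeq : W = U := (Polynomial.eq_of_dvd_of_natDegree_le_of_leadingCoeff hdvd
      (hUdeg.trans h.symm).le (hW.monic.trans hU.symm))
    have hcomp := congrArg (fun P ↦ P.comp (Polynomial.X - Polynomial.C c))
      (hUmap.symm.trans (hWeq ▸ (isDistinguishedAt_iff.1 hW).2))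
    simpa [Polynomial.comp_assoc, ← hWeq, h] using hcomp

theorem exists_min_order_ratio {n : ℕ} (a : ℕ → k⟦X⟧) (h : ∃ i < n, a i ≠ 0) :
    ∃ i < n, a i ≠ 0 ∧ ∀ j < n, (n - j) • (a i).order ≤ (n - i) • (a j).order := by
  classical
  obtain ⟨i, hi, hmin⟩ := Finset.exists_min_image {i ∈ Finset.range n | a i ≠ 0}
    (fun i ↦ ((a i).order.toNat : ℚ) / (n - i : ℕ))
    (by simpa [Finset.Nonempty] using h)
  simp only [Finset.mem_filter, Finset.mem_range] at hi hmin
  refine ⟨i, hi.1, hi.2, fun j hj ↦ ?_⟩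
  obtain hzero | hne := eq_or_ne (a j) 0
  · have hsub : ((n - i : ℕ) : ℕ∞) ≠ 0 := by exact_mod_cast Nat.sub_ne_zero_of_lt hi.1
    rw [hzero, PowerSeries.order_zero, nsmul_eq_mul (n - i), ENat.mul_top hsub]
    exact le_top
  have hratio := hmin j ⟨hj, hne⟩
  rw [div_le_div_iff₀ (by simpa using hi.1) (by simpa using hj)] at hratio
  rw [← ENat.natCast_toNat (PowerSeries.order_eq_top.not.2 hi.2),
    ← ENat.natCast_toNat (PowerSeries.order_eq_top.not.2 hne), nsmul_eq_mul, nsmul_eq_mul,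
    mul_comm, mul_comm ((n - i : ℕ) : ℕ∞)]
  exact_mod_cast hratio

theorem exists_scaleRoots_eq_map_expandHom {V : k⟦X⟧[X]} (h : ∃ i < V.natDegree, V.coeff i ≠ 0) :
    ∃ (q : ℕ) (hq : q ≠ 0) (p : ℕ) (W : k⟦X⟧[X]),
      W.scaleRoots (PowerSeries.X ^ p) = V.map (expandHom hq) ∧
      ∃ i < V.natDegree, (W.map PowerSeries.constantCoeff).coeff i ≠ 0 := by
  obtain ⟨i, hi, hne, hmin⟩ := exists_min_order_ratio V.coeff h
  obtain ⟨p, hp⟩ := ENat.ne_top_iff_exists.1 (PowerSeries.order_eq_top.not.2 hne)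
  have hq : V.natDegree - i ≠ 0 := by omega
  have hdeg : (V.map (expandHom hq)).natDegree = V.natDegree :=
    Polynomial.natDegree_map_eq_of_injective (expandHom_injective hq) V
  have horder (j : ℕ) : ((V.map (expandHom hq)).coeff j).order =
      (V.natDegree - i) • (V.coeff j).order := by
    rw [Polynomial.coeff_map]
    exact PowerSeries.order_expand _ hq _
  obtain ⟨W, hW⟩ : ∃ W : k⟦X⟧[X], W.scaleRoots (PowerSeries.X ^ p) = V.map (expandHom hq) := by
    refine exists_scaleRoots_eq fun j ↦ ?_
    rw [hdeg, ← pow_mul, X_pow_dvd_iff_le_order, horder]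
    obtain hj | hj := lt_or_ge j V.natDegree
    · refine le_trans (le_of_eq ?_) (hmin j hj)
      rw [← hp, nsmul_eq_mul, mul_comm p, Nat.cast_mul]
    · simp [Nat.sub_eq_zero_of_le hj]
  refine ⟨_, hq, p, W, hW, i, hi, fun hzero ↦ ?_⟩
  rw [Polynomial.coeff_map, ← PowerSeries.order_ne_zero_iff_constCoeff_eq_zero] at hzero
  have hWdeg : W.natDegree = V.natDegree := by
    rw [← hdeg, ← hW, Polynomial.natDegree_scaleRoots]
  have hWorder := horder i
  rw [← hW, Polynomial.coeff_scaleRoots, hWdeg, ← pow_mul, PowerSeries.order_mul,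
    PowerSeries.order_X_pow, ← hp, nsmul_eq_mul, mul_comm p, Nat.cast_mul] at hWorder
  refine hzero (ENat.add_left_injective_of_ne_top (n := ((V.natDegree - i : ℕ) : ℕ∞) * p) ?_ ?_)
  · exact_mod_cast ENat.natCast_ne_top ((V.natDegree - i) * p)
  · simpa using hWorder

theorem eq_zero_of_nextCoeff_X_sub_C_pow_eq_zero [CharZero k] {n : ℕ} (hn : n ≠ 0) {c : k}
    (h : ((Polynomial.X - Polynomial.C c) ^ n).nextCoeff = 0) : c = 0 := by
  rw [(Polynomial.monic_X_sub_C c).nextCoeff_pow, Polynomial.nextCoeff_X_sub_C] at h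
  simpa [hn] using h

theorem hasPuiseuxRoot_of_nextCoeff_eq_zero [CharZero k] [IsAlgClosed k] {V : k⟦X⟧[X]}
    (hV : V.Monic) (hdeg : V.natDegree ≠ 0) (hnext : V.nextCoeff = 0)
    (ih : ∀ Q : k⟦X⟧[X], Q.Monic → Q.natDegree ≠ 0 → Q.natDegree < V.natDegree →
      HasPuiseuxRoot Q) : HasPuiseuxRoot V := by
  by_cases hne : ∃ i < V.natDegree, V.coeff i ≠ 0
  swap
  · push Not at hne
    exact ⟨1, one_ne_zero, 0, by
      rw [Polynomial.eval₂_at_zero, hne 0 (Nat.pos_of_ne_zero hdeg), map_zero]⟩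
  obtain ⟨q, hq, p, W, hWV, i, hi, hWi⟩ := exists_scaleRoots_eq_map_expandHom hne
  have hW : W.Monic := (Polynomial.monic_scaleRoots_iff _).1 (hWV ▸ hV.map _)
  have hWdeg : W.natDegree = V.natDegree := by
    rw [← Polynomial.natDegree_scaleRoots, hWV, hV.natDegree_map]
  have hWnext : W.nextCoeff = 0 := by
    have h := nextCoeff_scaleRoots W (PowerSeries.X ^ p)
    rw [hWV, Polynomial.nextCoeff_map (expandHom_injective hq), hnext, map_zero] at h
    exact (mul_eq_zero.1 h.symm).resolve_right (pow_ne_zero _ PowerSeries.X_ne_zero)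
  obtain ⟨c, hc⟩ := IsAlgClosed.exists_root (W.map PowerSeries.constantCoeff)
    (Polynomial.degree_ne_of_natDegree_ne (by rwa [hW.natDegree_map, hWdeg]))
  obtain ⟨Q, hQ, hQdeg, hQlt, hQW⟩ := exists_monic_dvd_comp_X_add_C hW hc fun hpow ↦ by
    have hc0 : c = 0 := eq_zero_of_nextCoeff_X_sub_C_pow_eq_zero hdeg (by
      rw [← hWdeg, ← hpow, Polynomial.nextCoeff_map_eq_of_isUnit_leadingCoeff _ (by simp [hW]),
        hWnext, map_zero])
    rw [hpow, hc0, Polynomial.C_0, sub_zero, Polynomial.coeff_X_pow, hWdeg] at hWi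
    exact hWi (if_neg hi.ne)
  have hroot : HasPuiseuxRoot W :=
    ((ih Q hQ hQdeg (hWdeg ▸ hQlt)).of_dvd hQW).of_comp_X_add_C
  exact HasPuiseuxRoot.of_map_expandHom (hWV ▸ hroot.scaleRoots _)

theorem hasPuiseuxRoot_of_monic [CharZero k] [IsAlgClosed k] {V : k⟦X⟧[X]} (hV : V.Monic)
    (hdeg : V.natDegree ≠ 0) : HasPuiseuxRoot V := by
  induction hn : V.natDegree using Nat.strong_induction_on generalizing V with
  | _ n ih =>
  rw [hn] at hdeg
  set s : k⟦X⟧ := PowerSeries.C (n : k)⁻¹ * -V.nextCoeff with hs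
  have hdeg' : (V.comp (Polynomial.X + Polynomial.C s)).natDegree = n := by
    rw [← Polynomial.taylor_apply, Polynomial.natDegree_taylor, hn]
  have hnext : (V.comp (Polynomial.X + Polynomial.C s)).nextCoeff = 0 := by
    have hinv : (n : k⟦X⟧) * PowerSeries.C (n : k)⁻¹ = 1 := by
      rw [← map_natCast PowerSeries.C, ← map_mul, mul_inv_cancel₀ (Nat.cast_ne_zero.2 hdeg),
        map_one]
    rw [nextCoeff_comp_X_add_C hV, hn, hs, ← mul_assoc, hinv, one_mul, add_neg_cancel]
  exact (hasPuiseuxRoot_of_nextCoeff_eq_zero (hV.comp_X_add_C s) (hdeg'.trans_ne hdeg) hnext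
    fun Q hQ hQdeg hlt ↦ ih _ (hdeg' ▸ hlt) hQ hQdeg rfl).of_comp_X_add_C

end NewtonPuiseux

/-! ### Conjugates of a Puiseux root -/

/-- The conjugate `ρ (z ^ j * t)` of the power series `ρ (t)`. If `z` is a primitive `N`-th root of
unity, these are the conjugates of the Puiseux series `ρ (x ^ (1 / N))` over `k⟦x⟧`. -/
noncomputable abbrev conjugate {R : Type*} [CommRing R] (z : R) (ρ : R⟦X⟧) (j : ℕ) : R⟦X⟧ :=
  PowerSeries.rescale (z ^ j) ρ

theorem prod_X_sub_C_dvd_of_isRoot {A ι : Type*} [CommRing A] [IsDomain A] [Fintype ι]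
    {σ : ι → A} (hσ : Function.Injective σ) {P : A[X]} (h : ∀ j, P.IsRoot (σ j)) :
    ∏ j, (Polynomial.X - Polynomial.C (σ j)) ∣ P := by
  classical
  obtain rfl | hP := eq_or_ne P 0
  · exact dvd_zero _
  have hle : Finset.univ.val.map σ ≤ P.roots := by
    rw [Multiset.le_iff_subset ((Multiset.nodup_map_iff_of_injective hσ).2 Finset.univ.nodup)]
    intro x hx
    obtain ⟨j, _, rfl⟩ := Multiset.mem_map.1 hx
    exact (Polynomial.mem_roots hP).2 (h j)
  simpa [Multiset.map_map] using (Multiset.prod_X_sub_C_dvd_iff_le_roots hP _).2 hle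

section Conjugate

variable {k : Type*} [Field k] {N : ℕ} (hN : N ≠ 0) {z : k}

theorem eval₂_expandHom_conjugate (hz : IsPrimitiveRoot z N) (P : k⟦X⟧[X]) (ρ : k⟦X⟧) (j : ℕ) :
    P.eval₂ (expandHom hN) (conjugate z ρ j) = conjugate z (P.eval₂ (expandHom hN) ρ) j := by
  rw [conjugate, conjugate, Polynomial.hom_eval₂]
  congr 1
  ext1 a
  exact (rescale_expandHom hN (by rw [pow_right_comm, hz.pow_eq_one, one_pow]) a).symm

theorem exists_root_lt_of_rescale_eq_self {ρ : k⟦X⟧} {V : k⟦X⟧[X]}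
    (hroot : V.eval₂ (expandHom hN) ρ = 0) {w : k} (hwN : w ^ N = 1) (hw : w ≠ 1)
    (hfix : PowerSeries.rescale w ρ = ρ) :
    ∃ M < N, ∃ (hM : M ≠ 0) (σ : k⟦X⟧), V.eval₂ (expandHom hM) σ = 0 := by
  obtain ⟨M, rfl⟩ := orderOf_dvd_of_pow_eq_one hwN
  obtain ⟨hd, hM⟩ := mul_ne_zero_iff.1 hN
  obtain ⟨σ, rfl⟩ := mem_range_expandHom hd (IsPrimitiveRoot.orderOf w) hfix
  refine ⟨M, ?_, hM, σ, expandHom_injective hd ?_⟩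
  · have hone : orderOf w ≠ 1 := orderOf_eq_one_iff.not.2 hw
    exact lt_mul_left (Nat.pos_of_ne_zero hM) (by omega)
  · rw [map_zero, Polynomial.hom_eval₂, expandHom_comp, hroot]

theorem injective_conjugate_of_minimal (hz : IsPrimitiveRoot z N) {ρ : k⟦X⟧} {V : k⟦X⟧[X]}
    (hroot : V.eval₂ (expandHom hN) ρ = 0)
    (hmin : ∀ M < N, ∀ (hM : M ≠ 0) (σ : k⟦X⟧), V.eval₂ (expandHom hM) σ ≠ 0) :
    Function.Injective fun j : Fin N ↦ conjugate z ρ j := by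
  refine Function.Injective.of_lt_imp_ne fun i j hij h ↦ ?_
  have hzi : z ^ (i : ℕ) ≠ 0 := pow_ne_zero _ (hz.ne_zero hN)
  have hfix : PowerSeries.rescale (z ^ (j : ℕ) * (z ^ (i : ℕ))⁻¹) ρ = ρ := by
    have hij : PowerSeries.rescale (z ^ (j : ℕ)) ρ = PowerSeries.rescale (z ^ (i : ℕ)) ρ := h.symm
    rw [← PowerSeries.rescale_rescale, hij, PowerSeries.rescale_rescale, mul_inv_cancel₀ hzi,
      PowerSeries.rescale_one, RingHom.id_apply]
  have hpow (m : ℕ) : (z ^ m) ^ N = 1 := by rw [pow_right_comm, hz.pow_eq_one, one_pow]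
  obtain ⟨M, hMN, hM, σ, hσ⟩ := exists_root_lt_of_rescale_eq_self hN hroot
    (w := z ^ (j : ℕ) * (z ^ (i : ℕ))⁻¹) (by rw [mul_pow, inv_pow, hpow, hpow, inv_one, one_mul])
    (fun hone ↦ hij.ne' (Fin.ext (hz.pow_inj j.2 i.2 ((mul_inv_eq_one₀ hzi).1 hone)))) hfix
  exact hmin M hMN hM σ hσ

theorem exists_map_expandHom_eq_prod_conjugate (hz : IsPrimitiveRoot z N) (ρ : k⟦X⟧) :
    ∃ Q : k⟦X⟧[X], Q.map (expandHom hN) =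
      ∏ j : Fin N, (Polynomial.X - Polynomial.C (conjugate z ρ j)) := by
  set P := ∏ j : Fin N, (Polynomial.X - Polynomial.C (conjugate z ρ j)) with hP
  have hfix : P.map (PowerSeries.rescale z) = P := by
    simp only [hP, Polynomial.map_prod, Polynomial.map_sub, Polynomial.map_X, Polynomial.map_C,
      PowerSeries.rescale_rescale, ← pow_succ]
    rw [Fin.prod_univ_eq_prod_range
        (fun j ↦ Polynomial.X - Polynomial.C (conjugate z ρ (j + 1))) N,
      Fin.prod_univ_eq_prod_range (fun j ↦ Polynomial.X - Polynomial.C (conjugate z ρ j)) N]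
    obtain ⟨m, rfl⟩ := Nat.exists_eq_succ_of_ne_zero hN
    rw [Finset.prod_range_succ, Finset.prod_range_succ', conjugate, conjugate, hz.pow_eq_one,
      pow_zero]
  rw [← Polynomial.mem_lifts, Polynomial.lifts_iff_coeff_lifts]
  intro i
  exact mem_range_expandHom hN hz (by rw [← Polynomial.coeff_map, hfix])

theorem map_expandHom_eq_prod_conjugate (hz : IsPrimitiveRoot z N) {ρ : k⟦X⟧} {V : k⟦X⟧[X]}
    (hV : V.Monic) (hirr : Irreducible V) (hroot : V.eval₂ (expandHom hN) ρ = 0)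
    (hinj : Function.Injective fun j : Fin N ↦ conjugate z ρ j) :
    V.map (expandHom hN) = ∏ j : Fin N, (Polynomial.X - Polynomial.C (conjugate z ρ j)) := by
  obtain ⟨Q, hQ⟩ := exists_map_expandHom_eq_prod_conjugate hN hz ρ
  have hQmonic : Q.Monic := Polynomial.monic_of_injective (expandHom_injective hN) <| by
    rw [hQ]
    exact Polynomial.monic_prod_of_monic _ _ fun _ _ ↦ Polynomial.monic_X_sub_C _
  have hQdeg : Q.natDegree = N := by
    rw [← hQmonic.natDegree_map (expandHom hN), hQ]
    simp
  have hdvd : Q ∣ V := by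
    rw [← Polynomial.map_dvd_map _ (expandHom_injective hN) hQmonic, hQ]
    refine prod_X_sub_C_dvd_of_isRoot hinj fun j ↦ ?_
    rw [Polynomial.IsRoot, Polynomial.eval_map, eval₂_expandHom_conjugate hN hz, hroot, conjugate,
      map_zero]
  have hnotUnit : ¬IsUnit Q := fun h ↦ hN <| by
    rw [← hQdeg, hQmonic.isUnit_iff.1 h, Polynomial.natDegree_one]
  have hassoc : Associated V Q := (hirr.dvd_iff.1 hdvd).resolve_left hnotUnit
  rw [Polynomial.eq_of_monic_of_associated hV hQmonic hassoc, hQ]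

/-- Over `k⟦x ^ (1 / N)⟧` the polynomial `V` splits into linear factors whose roots are the
conjugates of the Puiseux series `ρ (x ^ (1 / N))`, and these are pairwise distinct. -/
structure IsPuiseuxSplitting (V : k⟦X⟧[X]) (z : k) (ρ : k⟦X⟧) : Prop where
  isPrimitiveRoot : IsPrimitiveRoot z N
  injective : Function.Injective fun j : Fin N ↦ conjugate z ρ j
  map_eq_prod :
    V.map (expandHom hN) = ∏ j : Fin N, (Polynomial.X - Polynomial.C (conjugate z ρ j))

theorem exists_isPuiseuxSplitting [IsAlgClosed k] [CharZero k] {V : k⟦X⟧[X]} (hV : V.Monic)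
    (hirr : Irreducible V) :
    ∃ (N : ℕ) (hN : N ≠ 0) (z : k) (ρ : k⟦X⟧), IsPuiseuxSplitting hN V z ρ := by
  classical
  have hdeg : V.natDegree ≠ 0 := fun h ↦
    hirr.not_isUnit ((Polynomial.eq_one_of_monic_natDegree_zero hV h).symm ▸ isUnit_one)
  obtain ⟨N, ⟨hN, ρ, hρ⟩, hmin⟩ := Nat.findX (hasPuiseuxRoot_of_monic hV hdeg)
  have : NeZero N := ⟨hN⟩
  obtain ⟨z, hz⟩ := HasEnoughRootsOfUnity.exists_primitiveRoot k N
  have hinj := injective_conjugate_of_minimal hN hz hρ fun M hMN hM σ h ↦ hmin M hMN ⟨hM, σ, h⟩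
  exact ⟨N, hN, z, ρ, hz, hinj, map_expandHom_eq_prod_conjugate hN hz hV hirr hρ hinj⟩

end Conjugate

namespace IsPuiseuxSplitting

variable {k : Type*} [Field k] {N : ℕ} {hN : N ≠ 0} {V : k⟦X⟧[X]} {z : k} {ρ : k⟦X⟧}

theorem monic (h : IsPuiseuxSplitting hN V z ρ) : V.Monic :=
  Polynomial.monic_of_injective (expandHom_injective hN) <| h.map_eq_prod ▸
    Polynomial.monic_prod_of_monic _ _ fun _ _ ↦ Polynomial.monic_X_sub_C _

theorem natDegree_eq (h : IsPuiseuxSplitting hN V z ρ) : V.natDegree = N := by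
  rw [← h.monic.natDegree_map (expandHom hN), h.map_eq_prod]
  simp

theorem eval₂_self (h : IsPuiseuxSplitting hN V z ρ) : V.eval₂ (expandHom hN) ρ = 0 := by
  rw [← Polynomial.eval_map, h.map_eq_prod, Polynomial.eval_prod]
  refine Finset.prod_eq_zero (Finset.mem_univ (⟨0, Nat.pos_of_ne_zero hN⟩ : Fin N)) ?_
  simp [conjugate, PowerSeries.rescale_one]

theorem dvd_of_eval₂_eq_zero (h : IsPuiseuxSplitting hN V z ρ) {P : k⟦X⟧[X]}
    (hP : P.eval₂ (expandHom hN) ρ = 0) : V ∣ P := by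
  rw [← Polynomial.map_dvd_map _ (expandHom_injective hN) h.monic, h.map_eq_prod]
  refine prod_X_sub_C_dvd_of_isRoot h.injective fun j ↦ ?_
  rw [Polynomial.IsRoot, Polynomial.eval_map, eval₂_expandHom_conjugate hN h.isPrimitiveRoot, hP,
    conjugate, map_zero]

theorem sum_order_conjugate_sub (h : IsPuiseuxSplitting hN V z ρ) (i : Fin N) :
    ∑ j ∈ Finset.univ.erase i, (conjugate z ρ i - conjugate z ρ j).order =
      ((Polynomial.derivative V).eval₂ (expandHom hN) ρ).order := by
  have hderiv : (Polynomial.derivative V).eval₂ (expandHom hN) (conjugate z ρ i) =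
      ∏ j ∈ Finset.univ.erase i, (conjugate z ρ i - conjugate z ρ j) := by
    rw [← Polynomial.eval_map, ← Polynomial.derivative_map, h.map_eq_prod,
      ← Finset.mul_prod_erase _ _ (Finset.mem_univ i), Polynomial.derivative_mul]
    simp [Polynomial.eval_prod]
  rw [← PowerSeries.order_prod, ← hderiv, eval₂_expandHom_conjugate hN h.isPrimitiveRoot,
    conjugate, order_rescale (pow_ne_zero _ (h.isPrimitiveRoot.ne_zero hN))]

end IsPuiseuxSplitting

/-! ### Parametrized branches -/

/-- The codimension of the image of `φ`, with value `⊤` if it is infinite. If `φ` is the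
normalization of a curve germ, then this is the `δ`-invariant of the germ. -/
noncomputable def delta {k T S : Type*} [CommRing k] [CommRing T] [Algebra k T] [CommRing S]
    [Algebra k S] (φ : T →ₐ[k] S) : ℕ∞ :=
  colength k φ.toLinearMap.range

/-- The homomorphism `φ : T → k⟦t⟧` parametrizes the branch `w = 0`: its kernel is generated by
`w ≠ 0`, and its image has finite codimension, so that `k⟦t⟧` is the normalization of `T / (w)`. -/
structure IsParametrization {k T : Type*} [Field k] [CommRing T] [Algebra k T]
    (φ : T →ₐ[k] k⟦X⟧) (w : T) : Prop where
  eq_zero_iff_dvd (G : T) : φ G = 0 ↔ w ∣ G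
  ne_zero : w ≠ 0
  delta_ne_top : delta φ ≠ ⊤

theorem colength_map_mulLeft {k : Type*} [Field k] (c : k⟦X⟧) (N : Submodule k k⟦X⟧) :
    colength k (N.map (LinearMap.mulLeft k c)) = c.order + colength k N := by
  have hrange : (Ideal.span {c}).restrictScalars k = (LinearMap.mulLeft k c).range := by
    ext t
    simp [Ideal.mem_span_singleton', mul_comm c]
  have hcolength : colength k (LinearMap.mulLeft k c).range = c.order := by
    rw [← hrange, colength_restrictScalars, colength_span_singleton]
  obtain rfl | hc := eq_or_ne c 0
  · rw [PowerSeries.order_zero, LinearMap.range_eq_map] at hcolength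
    rw [PowerSeries.order_zero, top_add, eq_top_iff, ← hcolength]
    exact colength_antitone k (Submodule.map_mono le_top)
  · rw [colength_map_of_injective (mul_right_injective₀ hc), hcolength, add_comm]

namespace IsParametrization

variable {k T : Type*} [Field k] [CommRing T] [Algebra k T] {φ : T →ₐ[k] k⟦X⟧} {w : T}

theorem apply_self (h : IsParametrization φ w) : φ w = 0 :=
  (h.eq_zero_iff_dvd w).2 dvd_rfl

theorem prime (h : IsParametrization φ w) : Prime w := by
  refine ⟨h.ne_zero, fun hunit ↦ ?_, fun a b hab ↦ ?_⟩
  · exact not_isUnit_zero (h.apply_self ▸ hunit.map φ)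
  · rwa [← h.eq_zero_iff_dvd, map_mul, mul_eq_zero, h.eq_zero_iff_dvd, h.eq_zero_iff_dvd] at hab

theorem of_associated (h : IsParametrization φ w) {w' : T} (hww' : Associated w w') :
    IsParametrization φ w' where
  eq_zero_iff_dvd G := (h.eq_zero_iff_dvd G).trans hww'.dvd_iff_dvd_left
  ne_zero := hww'.ne_zero_iff.1 h.ne_zero
  delta_ne_top := h.delta_ne_top

theorem intersectionNumber_eq_order (h : IsParametrization φ w) (G : T) :
    intersectionNumber k w G = (φ G).order := by
  have hcomap : (φ.toLinearMap.range.map (LinearMap.mulLeft k (φ G))).comap φ.toLinearMap =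
      (Ideal.span {w, G}).restrictScalars k := by
    ext t
    simp only [Submodule.restrictScalars_mem, Ideal.mem_span_pair, Submodule.mem_comap,
      Submodule.mem_map, LinearMap.mem_range, AlgHom.toLinearMap_apply, LinearMap.mulLeft_apply,
      exists_exists_eq_and]
    constructor
    · rintro ⟨b, hb⟩
      rw [← map_mul, ← sub_eq_zero, ← map_sub, h.eq_zero_iff_dvd] at hb
      obtain ⟨a, ha⟩ := hb
      exact ⟨-a, b, by linear_combination ha⟩
    · rintro ⟨a, b, rfl⟩
      exact ⟨b, by rw [map_add, map_mul, map_mul, h.apply_self]; ring⟩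
  have hsup : φ.toLinearMap.range.map (LinearMap.mulLeft k (φ G)) ⊔ φ.toLinearMap.range =
      φ.toLinearMap.range := by
    rw [sup_eq_right]
    rintro _ ⟨_, ⟨q, rfl⟩, rfl⟩
    exact ⟨G * q, map_mul φ G q⟩
  have hadd := colength_eq_add φ.toLinearMap (φ.toLinearMap.range.map (LinearMap.mulLeft k (φ G)))
  rw [colength_map_mulLeft, hcomap, hsup, colength_restrictScalars] at hadd
  exact (ENat.add_left_injective_of_ne_top h.delta_ne_top hadd).symm

theorem order_apply_ne_top_iff (h : IsParametrization φ w) {G : T} :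
    (φ G).order ≠ ⊤ ↔ ¬w ∣ G := by
  rw [Ne, PowerSeries.order_eq_top, h.eq_zero_iff_dvd]

end IsParametrization

section Family

variable {k T ι : Type*} [Field k] [CommRing T] [Algebra k T]
  {φ : ι → T →ₐ[k] k⟦X⟧} {w : ι → T}

theorem prod_dvd_iff_of_pairwise_not_dvd {s : Finset ι} (hw : ∀ i ∈ s, Prime (w i))
    (hdvd : (s : Set ι).Pairwise fun i j ↦ ¬w i ∣ w j) (G : T) :
    ∏ i ∈ s, w i ∣ G ↔ ∀ i ∈ s, w i ∣ G := by
  classical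
  refine ⟨fun h i hi ↦ (Finset.dvd_prod_of_mem w hi).trans h, fun h ↦ ?_⟩
  induction s using Finset.induction_on generalizing G with
  | empty => simp
  | insert a s ha ih =>
    rw [Finset.coe_insert] at hdvd
    simp only [Finset.forall_mem_insert] at hw h
    obtain ⟨H, rfl⟩ := h.1
    rw [Finset.prod_insert ha]
    refine mul_dvd_mul_left _ (ih hw.2 (hdvd.mono (Set.subset_insert a s)) H fun i hi ↦ ?_)
    refine ((hw.2 i hi).dvd_or_dvd (h.2 i hi)).resolve_left ?_
    exact hdvd (Set.mem_insert_of_mem a hi) (Set.mem_insert a s) (ne_of_mem_of_not_mem hi ha)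

/-- The vectors of `ι → k⟦t⟧` that agree with some element of `T` along the branches in `s`. For
`s = univ` this is the image of `T` in the normalization of the union of all the branches. -/
def agreeingVectors (φ : ι → T →ₐ[k] k⟦X⟧) (s : Finset ι) : Submodule k (ι → k⟦X⟧) where
  carrier := {v | ∃ G, ∀ i ∈ s, φ i G = v i}
  add_mem' := by
    rintro v v' ⟨G, hG⟩ ⟨G', hG'⟩
    exact ⟨G + G', fun i hi ↦ by simp [hG i hi, hG' i hi]⟩
  zero_mem' := ⟨0, by simp⟩
  smul_mem' := by
    rintro a v ⟨G, hG⟩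
    exact ⟨a • G, fun i hi ↦ by simp [hG i hi]⟩

theorem mem_agreeingVectors {s : Finset ι} {v : ι → k⟦X⟧} :
    v ∈ agreeingVectors φ s ↔ ∃ G, ∀ i ∈ s, φ i G = v i :=
  Iff.rfl

theorem colength_agreeingVectors_insert [DecidableEq ι] {s : Finset ι} {a : ι} (ha : a ∉ s)
    (hφ : ∀ i, IsParametrization (φ i) (w i)) (hdvd : Pairwise fun i j ↦ ¬w i ∣ w j) :
    colength k (agreeingVectors φ (insert a s)) =
      colength k (agreeingVectors φ s) + delta (φ a) + ∑ i ∈ s, (φ a (w i)).order := by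
  have hcomap : (agreeingVectors φ (insert a s)).comap (LinearMap.single k (fun _ ↦ k⟦X⟧) a) =
      (φ a).toLinearMap.range.map (LinearMap.mulLeft k (φ a (∏ i ∈ s, w i))) := by
    ext c
    have hne (i : ι) (hi : i ∈ s) : i ≠ a := ne_of_mem_of_not_mem hi ha
    have hmem : c ∈ (agreeingVectors φ (insert a s)).comap (LinearMap.single k (fun _ ↦ k⟦X⟧) a) ↔
        ∃ G, φ a G = c ∧ ∏ i ∈ s, w i ∣ G := by
      simp +contextual [mem_agreeingVectors, (hφ _).eq_zero_iff_dvd, hne,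
        prod_dvd_iff_of_pairwise_not_dvd (fun i _ ↦ (hφ i).prime) (hdvd.set_pairwise s)]
    rw [hmem]
    constructor
    · rintro ⟨_, rfl, H, rfl⟩
      exact ⟨_, ⟨H, rfl⟩, (map_mul _ _ _).symm⟩
    · rintro ⟨_, ⟨H, rfl⟩, rfl⟩
      exact ⟨_, map_mul _ _ _, dvd_mul_right _ H⟩
  have hsup : agreeingVectors φ (insert a s) ⊔ (LinearMap.single k (fun _ ↦ k⟦X⟧) a).range =
      agreeingVectors φ s := by
    ext v
    simp only [Submodule.mem_sup, LinearMap.mem_range, exists_exists_eq_and, mem_agreeingVectors]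
    constructor
    · rintro ⟨v, ⟨G, hG⟩, c, rfl⟩
      refine ⟨G, fun i hi ↦ ?_⟩
      simp [hG i (Finset.mem_insert_of_mem hi), ne_of_mem_of_not_mem hi ha]
    · rintro ⟨G, hG⟩
      refine ⟨v - Pi.single a (v a - φ a G), ⟨G, fun i hi ↦ ?_⟩, v a - φ a G, by simp⟩
      obtain rfl | hia := eq_or_ne i a
      · simp
      · simp [hG i ((Finset.mem_insert.1 hi).resolve_left hia), hia]
  rw [colength_eq_add (LinearMap.single k (fun _ ↦ k⟦X⟧) a), hcomap, hsup, colength_map_mulLeft,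
    map_prod, PowerSeries.order_prod, delta, add_comm, add_right_comm, add_assoc]

theorem two_mul_colength_agreeingVectors [DecidableEq ι] (hφ : ∀ i, IsParametrization (φ i) (w i))
    (hdvd : Pairwise fun i j ↦ ¬w i ∣ w j) (s : Finset ι) :
    2 * colength k (agreeingVectors φ s) =
      ∑ i ∈ s, (2 * delta (φ i) + ∑ j ∈ s.erase i, (φ i (w j)).order) := by
  induction s using Finset.induction_on with
  | empty =>
    have htop : agreeingVectors φ ∅ = ⊤ := eq_top_iff.2 fun v _ ↦ ⟨0, by simp⟩
    simp [htop, colength_top]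
  | insert a s ha ih =>
    have hsymm (i : ι) : (φ i (w a)).order = (φ a (w i)).order := by
      rw [← (hφ i).intersectionNumber_eq_order, ← (hφ a).intersectionNumber_eq_order,
        intersectionNumber_comm]
    have herase : ∀ i ∈ s, ∑ j ∈ (insert a s).erase i, (φ i (w j)).order =
        (φ a (w i)).order + ∑ j ∈ s.erase i, (φ i (w j)).order := fun i hi ↦ by
      rw [Finset.erase_insert_of_ne (ne_of_mem_of_not_mem hi ha).symm,
        Finset.sum_insert (fun h ↦ ha (Finset.mem_of_mem_erase h)), hsymm]
    rw [colength_agreeingVectors_insert ha hφ hdvd, Finset.sum_insert ha,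
      Finset.erase_insert ha, mul_add, mul_add, ih,
      Finset.sum_congr rfl fun i hi ↦ congrArg (2 * delta (φ i) + ·) (herase i hi)]
    simp only [Finset.sum_add_distrib]
    ring

theorem two_mul_delta_pi [Fintype ι] [DecidableEq ι] (hφ : ∀ i, IsParametrization (φ i) (w i))
    (hdvd : Pairwise fun i j ↦ ¬w i ∣ w j) :
    2 * delta (AlgHom.pi φ) =
      ∑ i, (2 * delta (φ i) + ∑ j ∈ Finset.univ.erase i, (φ i (w j)).order) := by
  have hrange : (AlgHom.pi φ).toLinearMap.range = agreeingVectors φ Finset.univ := by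
    ext v
    simp [mem_agreeingVectors, funext_iff]
  rw [delta, hrange, two_mul_colength_agreeingVectors hφ hdvd]

theorem two_mul_delta_add_sum_order_ne_top [Fintype ι] [DecidableEq ι] {i : ι}
    (hφ : IsParametrization (φ i) (w i)) (hdvd : Pairwise fun i j ↦ ¬w i ∣ w j) :
    2 * delta (φ i) + ∑ j ∈ Finset.univ.erase i, (φ i (w j)).order ≠ ⊤ := by
  refine WithTop.add_ne_top.2 ⟨WithTop.mul_ne_top (ENat.natCast_ne_top 2) hφ.delta_ne_top,
    ENat.sum_ne_top.2 fun j hj ↦ hφ.order_apply_ne_top_iff.2 ?_⟩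
  exact hdvd (Finset.ne_of_mem_erase hj).symm

theorem delta_pi_ne_top [Finite ι] (hφ : ∀ i, IsParametrization (φ i) (w i))
    (hdvd : Pairwise fun i j ↦ ¬w i ∣ w j) : delta (AlgHom.pi φ) ≠ ⊤ := by
  classical
  have := Fintype.ofFinite ι
  intro htop
  have hsum := two_mul_delta_pi hφ hdvd
  rw [htop, ENat.mul_top two_ne_zero] at hsum
  exact ENat.sum_ne_top.2 (fun i _ ↦ two_mul_delta_add_sum_order_ne_top (hφ i) hdvd) hsum.symm

end Family

/-! ### The Puiseux parametrization of a branch -/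

section PowersMatrix

variable {k : Type*} [Field k] {N : ℕ} (hN : N ≠ 0)

/-- The coordinates of `1, ρ, …, ρ ^ (N - 1)` in the basis `1, t, …, t ^ (N - 1)` of `k⟦t⟧` over
`k⟦t ^ N⟧`. -/
noncomputable def powersMatrix (ρ : k⟦X⟧) : Matrix (Fin N) (Fin N) k⟦X⟧ :=
  fun i j ↦ (residueDecomposition hN).symm (ρ ^ (j : ℕ)) i

theorem sum_powersMatrix (ρ : k⟦X⟧) (j : Fin N) :
    ∑ i, expandHom hN (powersMatrix hN ρ i j) * PowerSeries.X ^ (i : ℕ) = ρ ^ (j : ℕ) :=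
  (residueDecomposition hN).apply_symm_apply (ρ ^ (j : ℕ))

theorem residueDecomposition_toLin'_powersMatrix (ρ : k⟦X⟧) (v : Fin N → k⟦X⟧) :
    residueDecomposition hN (Matrix.toLin' (powersMatrix hN ρ) v) =
      ∑ j, expandHom hN (v j) * ρ ^ (j : ℕ) := by
  simp only [residueDecomposition_apply, Matrix.toLin'_apply, Matrix.mulVec, dotProduct, map_sum,
    map_mul, Finset.sum_mul, ← sum_powersMatrix hN ρ, Finset.mul_sum]
  rw [Finset.sum_comm]
  exact Finset.sum_congr rfl fun j _ ↦ Finset.sum_congr rfl fun i _ ↦ by ring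

theorem vandermonde_conjugate {z : k} (hz : IsPrimitiveRoot z N) (ρ : k⟦X⟧) :
    Matrix.vandermonde (fun j : Fin N ↦ conjugate z ρ j) =
      Matrix.vandermonde (fun j : Fin N ↦ conjugate z PowerSeries.X j) *
        (powersMatrix hN ρ).map (expandHom hN) := by
  ext1 l j
  rw [Matrix.vandermonde_apply, Matrix.mul_apply, conjugate, ← map_pow, ← sum_powersMatrix hN ρ j,
    map_sum]
  refine Finset.sum_congr rfl fun i _ ↦ ?_
  rw [map_mul, map_pow, rescale_expandHom hN (by rw [pow_right_comm, hz.pow_eq_one, one_pow]),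
    Matrix.vandermonde_apply, Matrix.map_apply, mul_comm]

theorem det_vandermonde_conjugate {z : k} (hz : IsPrimitiveRoot z N) (ρ : k⟦X⟧) :
    (Matrix.vandermonde fun j : Fin N ↦ conjugate z ρ j).det =
      (Matrix.vandermonde fun j : Fin N ↦ conjugate z PowerSeries.X j).det *
        expandHom hN (powersMatrix hN ρ).det := by
  rw [vandermonde_conjugate hN hz, Matrix.det_mul, ← RingHom.mapMatrix_apply, ← RingHom.map_det]

theorem two_mul_order_det_vandermonde_conjugate_X {z : k} (hz : IsPrimitiveRoot z N) :
    2 * (Matrix.vandermonde fun j : Fin N ↦ conjugate z (PowerSeries.X : k⟦X⟧) j).det.order =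
      N * (N - 1 : ℕ) := by
  have hone (i j : Fin N) (hij : j ∈ Finset.univ.erase i) :
      (conjugate z (PowerSeries.X : k⟦X⟧) i - conjugate z PowerSeries.X j).order = 1 := by
    have hne : z ^ (i : ℕ) - z ^ (j : ℕ) ≠ 0 := fun h ↦
      Finset.ne_of_mem_erase hij (Fin.ext (hz.pow_inj j.2 i.2 (sub_eq_zero.1 h).symm))
    rw [conjugate, conjugate, PowerSeries.rescale_X, PowerSeries.rescale_X, ← sub_mul, ← map_sub,
      PowerSeries.order_mul, PowerSeries.order_X,
      PowerSeries.order_zero_of_unit ((IsUnit.mk0 _ hne).map _), zero_add]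
  rw [two_mul_order_det_vandermonde,
    Finset.sum_congr rfl fun i _ ↦ Finset.sum_congr rfl (hone i)]
  simp

end PowersMatrix

theorem exists_algHom_coe_eq {k A B : Type*} [CommRing k] [CommRing A] [Algebra k A] [CommRing B]
    [Algebra k B] {I : Ideal A} [IsAdicComplete I A] {W : A[X]} (hW : W.IsDistinguishedAt I)
    {f : A[X] →ₐ[k] B} (hf : f W = 0) :
    ∃ φ : A⟦X⟧ →ₐ[k] B, ∀ P : A[X], φ P = f P := by
  have hker (P : A[X]) (hP : P ∈ Ideal.span {W}) : f P = 0 := by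
    obtain ⟨Q, rfl⟩ := Ideal.mem_span_singleton.1 hP
    rw [map_mul, hf, zero_mul]
  refine ⟨((Ideal.Quotient.liftₐ _ f hker).comp
    (hW.algEquivQuotient.symm.restrictScalars k).toAlgHom).comp (Ideal.Quotient.mkₐ k _),
    fun P ↦ ?_⟩
  have hsymm : hW.algEquivQuotient.symm (Ideal.Quotient.mk _ (P : A⟦X⟧)) =
      Ideal.Quotient.mk _ P := hW.algEquivQuotient.symm_apply_apply (Ideal.Quotient.mk _ P)
  change Ideal.Quotient.liftₐ _ f hker (hW.algEquivQuotient.symm (Ideal.Quotient.mk _ _)) = _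
  rw [hsymm]
  rfl

namespace IsPuiseuxSplitting

variable {k : Type*} [Field k] {N : ℕ} {hN : N ≠ 0} {V : k⟦X⟧[X]} {z : k} {ρ : k⟦X⟧}

theorem det_powersMatrix_ne_zero (h : IsPuiseuxSplitting hN V z ρ) :
    (powersMatrix hN ρ).det ≠ 0 := fun hzero ↦
  Matrix.det_vandermonde_ne_zero_iff.2 h.injective <| by
    rw [det_vandermonde_conjugate hN h.isPrimitiveRoot, hzero, map_zero, mul_zero]

theorem order_eval₂_derivative_add_one (h : IsPuiseuxSplitting hN V z ρ) :
    ((Polynomial.derivative V).eval₂ (expandHom hN) ρ).order + 1 =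
      2 * (powersMatrix hN ρ).det.order + N := by
  have hexpand : (expandHom hN (powersMatrix hN ρ).det).order =
      N * (powersMatrix hN ρ).det.order := by
    rw [← nsmul_eq_mul]
    exact PowerSeries.order_expand N hN _
  have hvand := two_mul_order_det_vandermonde fun j : Fin N ↦ conjugate z ρ j
  rw [det_vandermonde_conjugate hN h.isPrimitiveRoot, PowerSeries.order_mul, mul_add,
    two_mul_order_det_vandermonde_conjugate_X h.isPrimitiveRoot, hexpand,
    Finset.sum_congr rfl fun i _ ↦ h.sum_order_conjugate_sub i, Finset.sum_const,
    Finset.card_univ, Fintype.card_fin, nsmul_eq_mul, mul_left_comm, ← mul_add] at hvand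
  have hN0 : (N : ℕ∞) ≠ 0 := by exact_mod_cast hN
  rw [← (ENat.mul_right_strictMono hN0 (ENat.natCast_ne_top N)).injective hvand, add_comm _ 1,
    ← add_assoc, add_comm _ (2 * _)]
  congr 1
  exact_mod_cast (by omega : 1 + (N - 1) = N)

section Evaluation

variable {φ : k⟦X⟧⟦X⟧ →ₐ[k] k⟦X⟧}

theorem range_eq (h : IsPuiseuxSplitting hN V z ρ)
    (hV : V.IsDistinguishedAt (IsLocalRing.maximalIdeal k⟦X⟧))
    (hφ : ∀ P : k⟦X⟧[X], φ P = P.eval₂ (expandHom hN) ρ) :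
    φ.toLinearMap.range = ((Matrix.toLin' (powersMatrix hN ρ)).range.restrictScalars k).map
      (residueDecomposition hN).toLinearMap := by
  ext c
  simp only [LinearMap.mem_range, Submodule.mem_map, Submodule.restrictScalars_mem,
    exists_exists_eq_and, AlgHom.toLinearMap_apply, LinearEquiv.coe_coe,
    residueDecomposition_toLin'_powersMatrix]
  constructor
  · rintro ⟨G, rfl⟩
    obtain ⟨P, hdeg, Q, hQ⟩ := exists_coe_dvd_sub_coe hV G
    have hP : P.natDegree < N := by
      rw [← h.natDegree_eq]
      obtain rfl | hP := eq_or_ne P 0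
      · rw [Polynomial.natDegree_zero, h.natDegree_eq]
        exact Nat.pos_of_ne_zero hN
      · exact Polynomial.natDegree_lt_natDegree hP hdeg
    refine ⟨fun j ↦ P.coeff j, ?_⟩
    rw [Fin.sum_univ_eq_sum_range (fun j ↦ expandHom hN (P.coeff j) * ρ ^ j),
      ← Polynomial.eval₂_eq_sum_range' _ hP, ← hφ, sub_eq_iff_eq_add.1 hQ, map_add, map_mul,
      hφ V, h.eval₂_self, zero_mul, zero_add]
  · rintro ⟨v, rfl⟩
    refine ⟨((∑ j : Fin N, Polynomial.C (v j) * Polynomial.X ^ (j : ℕ) : k⟦X⟧[X]) : k⟦X⟧⟦X⟧), ?_⟩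
    rw [hφ, Polynomial.eval₂_finsetSum]
    simp

theorem delta_eq_order_det (h : IsPuiseuxSplitting hN V z ρ)
    (hV : V.IsDistinguishedAt (IsLocalRing.maximalIdeal k⟦X⟧))
    (hφ : ∀ P : k⟦X⟧[X], φ P = P.eval₂ (expandHom hN) ρ) :
    delta φ = (powersMatrix hN ρ).det.order := by
  rw [delta, h.range_eq hV hφ, colength_map_of_injective (residueDecomposition hN).injective,
    colength_restrictScalars, colength_range_toLin' h.det_powersMatrix_ne_zero,
    colength_span_singleton, LinearEquiv.range, colength_top, add_zero]

theorem isParametrization (h : IsPuiseuxSplitting hN V z ρ)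
    (hV : V.IsDistinguishedAt (IsLocalRing.maximalIdeal k⟦X⟧))
    (hφ : ∀ P : k⟦X⟧[X], φ P = P.eval₂ (expandHom hN) ρ) :
    IsParametrization φ (V : k⟦X⟧⟦X⟧) where
  eq_zero_iff_dvd G := by
    obtain ⟨P, -, Q, hQ⟩ := exists_coe_dvd_sub_coe hV G
    rw [sub_eq_iff_eq_add] at hQ
    have hG : φ G = P.eval₂ (expandHom hN) ρ := by
      rw [hQ, map_add, map_mul, hφ, h.eval₂_self, zero_mul, zero_add, hφ]
    constructor
    · intro hzero
      obtain ⟨R, rfl⟩ := h.dvd_of_eval₂_eq_zero (hG ▸ hzero)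
      rw [hQ, Polynomial.coe_mul, ← mul_add]
      exact dvd_mul_right _ _
    · rintro ⟨R, rfl⟩
      rw [map_mul, hφ, h.eval₂_self, zero_mul]
  ne_zero := Polynomial.coe_eq_zero_iff.not.2 hV.monic.ne_zero
  delta_ne_top := by
    rw [h.delta_eq_order_det hV hφ]
    exact PowerSeries.order_eq_top.not.2 h.det_powersMatrix_ne_zero

end Evaluation

end IsPuiseuxSplitting

/-- A parametrization `φ` of the branch `w = 0` that computes the intersection multiplicity of the
branch with the axis `x = 0` and satisfies Milnor's formula `i (w, ∂w/∂y) + 1 = 2 δ + i (w, x)`. -/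
structure IsMilnorParametrization {k : Type*} [Field k] (φ : k⟦X⟧⟦X⟧ →ₐ[k] k⟦X⟧) (w : k⟦X⟧⟦X⟧) :
    Prop extends IsParametrization φ w where
  order_x : (φ (PowerSeries.C PowerSeries.X)).order = (w.map PowerSeries.constantCoeff).order
  order_derivative_add_one : (φ (PowerSeries.derivative k⟦X⟧ w)).order + 1 =
    2 * delta φ + (w.map PowerSeries.constantCoeff).order

section MilnorParametrization

variable {k : Type*} [Field k]

theorem order_apply_derivative_of_associated {φ : k⟦X⟧⟦X⟧ →ₐ[k] k⟦X⟧} {w w' : k⟦X⟧⟦X⟧}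
    (hw : φ w = 0) (h : Associated w w') :
    (φ (PowerSeries.derivative k⟦X⟧ w')).order = (φ (PowerSeries.derivative k⟦X⟧ w)).order := by
  obtain ⟨u, rfl⟩ := h
  rw [derivative_mul, map_add, map_mul, map_mul, hw, zero_mul, zero_add, PowerSeries.order_mul,
    PowerSeries.order_zero_of_unit (u.isUnit.map φ), zero_add]

theorem order_map_eq_of_associated {w w' : k⟦X⟧⟦X⟧} (h : Associated w w') :
    (w'.map PowerSeries.constantCoeff).order = (w.map PowerSeries.constantCoeff).order := by
  obtain ⟨u, rfl⟩ := h
  rw [map_mul, PowerSeries.order_mul, PowerSeries.order_zero_of_unit (u.isUnit.map _), add_zero]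

theorem IsMilnorParametrization.of_associated {φ : k⟦X⟧⟦X⟧ →ₐ[k] k⟦X⟧} {w w' : k⟦X⟧⟦X⟧}
    (h : IsMilnorParametrization φ w) (hww' : Associated w w') :
    IsMilnorParametrization φ w' where
  toIsParametrization := h.toIsParametrization.of_associated hww'
  order_x := by rw [order_map_eq_of_associated hww', h.order_x]
  order_derivative_add_one := by
    rw [order_apply_derivative_of_associated h.apply_self hww', order_map_eq_of_associated hww',
      h.order_derivative_add_one]

theorem exists_isMilnorParametrization [IsAlgClosed k] [CharZero k] {g : k⟦X⟧⟦X⟧}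
    (hg : Irreducible g) (hg0 : g.map PowerSeries.constantCoeff ≠ 0) :
    ∃ φ : k⟦X⟧⟦X⟧ →ₐ[k] k⟦X⟧, IsMilnorParametrization φ g := by
  obtain ⟨V, hV, -, hVg⟩ := exists_isDistinguishedAt_associated hg0
  have hirr : Irreducible V := irreducible_of_irreducible_coe hV (hVg.irreducible_iff.2 hg)
  obtain ⟨N, hN, z, ρ, h⟩ := exists_isPuiseuxSplitting hV.monic hirr
  let f : k⟦X⟧[X] →ₐ[k] k⟦X⟧ :=
    { Polynomial.eval₂RingHom (expandHom hN) ρ with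
      commutes' := fun a ↦ (Polynomial.eval₂_C _ _).trans (PowerSeries.expand_C N hN a) }
  have hf (P : k⟦X⟧[X]) : f P = P.eval₂ (expandHom hN) ρ := rfl
  obtain ⟨φ, hφ⟩ := exists_algHom_coe_eq hV (f := f) h.eval₂_self
  have hVdeg : ((V : k⟦X⟧⟦X⟧).map PowerSeries.constantCoeff).order = N := by
    rw [← Polynomial.polynomial_map_coe, (isDistinguishedAt_iff.1 hV).2, Polynomial.coe_pow,
      Polynomial.coe_X, PowerSeries.order_X_pow, h.natDegree_eq]
  refine ⟨φ, IsMilnorParametrization.of_associated ⟨h.isParametrization hV hφ, ?_, ?_⟩ hVg⟩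
  · rw [← Polynomial.coe_C, hφ, hf, Polynomial.eval₂_C, hVdeg]
    simp
  · rw [PowerSeries.derivative_coe, hφ, hf, h.order_eval₂_derivative_add_one,
      h.delta_eq_order_det hV hφ, hVdeg]

end MilnorParametrization

/-! ### Partial derivatives -/

section PartialDerivatives

variable {k : Type*} [Field k]

theorem algebraMap_eq_C_C (a : k) :
    algebraMap k k⟦X⟧⟦X⟧ a = PowerSeries.C (PowerSeries.C a) := by
  rw [PowerSeries.algebraMap_apply]
  rfl

/-- The derivation `∂/∂x` of `k⟦x⟧⟦y⟧`; the derivation `∂/∂y` is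
`PowerSeries.derivative k⟦X⟧`. -/
noncomputable def derivativeX : Derivation k k⟦X⟧⟦X⟧ k⟦X⟧⟦X⟧ :=
  Derivation.mk'
    { toFun := fun G ↦ PowerSeries.mk fun n ↦ PowerSeries.derivative k (PowerSeries.coeff n G)
      map_add' := fun G H ↦ by ext1 n; simp
      map_smul' := fun a G ↦ by ext1 n; simp }
    fun G H ↦ by
      ext1 n
      simp only [LinearMap.coe_mk, AddHom.coe_mk, PowerSeries.coeff_mk, PowerSeries.coeff_mul,
        map_sum, derivative_mul, smul_eq_mul, map_add, Finset.sum_add_distrib]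
      rw [add_right_inj, ← Finset.Nat.sum_antidiagonal_swap]
      rfl

theorem coeff_derivativeX (n : ℕ) (G : k⟦X⟧⟦X⟧) :
    PowerSeries.coeff n (derivativeX G) = PowerSeries.derivative k (PowerSeries.coeff n G) := by
  simp [derivativeX]

theorem derivativeX_C (a : k⟦X⟧) :
    derivativeX (PowerSeries.C a) = PowerSeries.C (PowerSeries.derivative k a) := by
  ext1 n
  rw [coeff_derivativeX, PowerSeries.coeff_C, PowerSeries.coeff_C,
    apply_ite (PowerSeries.derivative k), map_zero]

theorem derivativeX_X : derivativeX (PowerSeries.X : k⟦X⟧⟦X⟧) = 0 := by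
  ext1 n
  rw [coeff_derivativeX, PowerSeries.coeff_X]
  split_ifs <;> simp

theorem exists_eq_algebraMap_add (G : k⟦X⟧⟦X⟧) :
    ∃ c G₁ G₂, G = algebraMap k _ c + PowerSeries.C PowerSeries.X * G₁ + PowerSeries.X * G₂ := by
  have ha := (PowerSeries.constantCoeff G).eq_X_mul_shift_add_const
  have hG := G.eq_X_mul_shift_add_const
  rw [ha, map_add, map_mul, ← algebraMap_eq_C_C, ← add_assoc, add_comm, add_comm (_ * _),
    ← add_assoc] at hG
  exact ⟨_, _, _, hG⟩

variable {S : Type*} [CommRing S] [Algebra k S] [IsLocalRing S] [IsNoetherianRing S]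

-- Both sides are derivations along `φ` that agree at `x` and `y`; writing `G` as
-- `c + x G₁ + y G₂` shows that their difference lies in every power of the maximal ideal.
theorem leibniz_eq_partial_derivatives (φ : k⟦X⟧⟦X⟧ →ₐ[k] S) [IsLocalHom φ]
    (D : k⟦X⟧⟦X⟧ →ₗ[k] S) (hD : ∀ G H, D (G * H) = φ G * D H + φ H * D G) (G : k⟦X⟧⟦X⟧) :
    D G = φ (derivativeX G) * D (PowerSeries.C PowerSeries.X) +
      φ (PowerSeries.derivative k⟦X⟧ G) * D PowerSeries.X := by
  have hmem {a : k⟦X⟧⟦X⟧} (ha : ¬IsUnit a) : φ a ∈ IsLocalRing.maximalIdeal S :=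
    fun h ↦ ha (isUnit_of_map_unit φ a h)
  have hx : φ (PowerSeries.C PowerSeries.X) ∈ IsLocalRing.maximalIdeal S := hmem <| by
    simp [PowerSeries.isUnit_iff_constantCoeff]
  have hy : φ PowerSeries.X ∈ IsLocalRing.maximalIdeal S := hmem <| by
    simp [PowerSeries.isUnit_iff_constantCoeff]
  have hconst (c : k) : D (algebraMap k _ c) = 0 := by
    have hone : D 1 = 0 := by simpa using hD 1 1
    rw [Algebra.algebraMap_eq_smul_one, map_smul, hone, smul_zero]
  suffices h : ∀ n G, D G - (φ (derivativeX G) * D (PowerSeries.C PowerSeries.X) +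
      φ (PowerSeries.derivative k⟦X⟧ G) * D PowerSeries.X) ∈ IsLocalRing.maximalIdeal S ^ n by
    rw [← sub_eq_zero, ← Ideal.mem_bot,
      ← Ideal.iInf_pow_eq_bot_of_isLocalRing _ (IsLocalRing.maximalIdeal.isMaximal S).ne_top]
    exact Ideal.mem_iInf.2 fun n ↦ h n G
  intro n
  induction n with
  | zero => simp
  | succ n ih =>
    intro G
    obtain ⟨c, G₁, G₂, rfl⟩ := exists_eq_algebraMap_add G
    have hdy : PowerSeries.derivative k⟦X⟧ (algebraMap k k⟦X⟧⟦X⟧ c) = 0 := by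
      rw [algebraMap_eq_C_C, PowerSeries.derivative_C]
    rw [pow_succ]
    convert add_mem (Ideal.mul_mem_mul (ih G₁) hx) (Ideal.mul_mem_mul (ih G₂) hy) using 1
    simp only [map_add, Derivation.leibniz, hD, hconst, hdy, derivativeX_C,
      derivativeX_X, map_mul, smul_eq_mul, PowerSeries.derivative_X, PowerSeries.derivative_C,
      Derivation.map_algebraMap, map_one, map_zero]
    ring

instance isLocalHom_algHom (φ : k⟦X⟧⟦X⟧ →ₐ[k] k⟦X⟧) : IsLocalHom φ where
  map_nonunit G hG := by
    have hc : PowerSeries.constantCoeff (φ G) ≠ 0 :=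
      (PowerSeries.isUnit_iff_constantCoeff.1 hG).ne_zero
    by_contra hGunit
    rw [PowerSeries.isUnit_iff_constantCoeff, PowerSeries.isUnit_iff_constantCoeff,
      isUnit_iff_ne_zero, not_not] at hGunit
    have hsub : IsUnit (G - algebraMap k _ (PowerSeries.constantCoeff (φ G))) := by
      simpa [algebraMap_eq_C_C, PowerSeries.isUnit_iff_constantCoeff, hGunit] using hc
    have hφ := hsub.map φ
    rw [map_sub, AlgHom.commutes, PowerSeries.isUnit_iff_constantCoeff, map_sub,
      PowerSeries.algebraMap_eq, PowerSeries.constantCoeff_C, sub_self] at hφ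
    exact not_isUnit_zero hφ

theorem derivative_apply_algHom (φ : k⟦X⟧⟦X⟧ →ₐ[k] k⟦X⟧) (G : k⟦X⟧⟦X⟧) :
    PowerSeries.derivative k (φ G) =
      φ (derivativeX G) * PowerSeries.derivative k (φ (PowerSeries.C PowerSeries.X)) +
        φ (PowerSeries.derivative k⟦X⟧ G) * PowerSeries.derivative k (φ PowerSeries.X) :=
  leibniz_eq_partial_derivatives φ ((PowerSeries.derivative k).toLinearMap ∘ₗ φ.toLinearMap)
    (fun G H ↦ by simp) G

end PartialDerivatives

/-! ### Teissier's lemma and Milnor's formula for power series -/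

section Teissier

variable {k : Type*} [Field k] [CharZero k] {P : k⟦X⟧⟦X⟧}

theorem IsMilnorParametrization.order_apply_eq {φ : k⟦X⟧⟦X⟧ →ₐ[k] k⟦X⟧} {h : k⟦X⟧⟦X⟧}
    (hφ : IsMilnorParametrization φ h) (hP : ¬IsUnit P)
    (hdvd : h ∣ PowerSeries.derivative k⟦X⟧ P) :
    (φ P).order =
      (φ (derivativeX P)).order + (h.map PowerSeries.constantCoeff).order := by
  have hconst {G : k⟦X⟧⟦X⟧} (hG : ¬IsUnit G) : PowerSeries.constantCoeff (φ G) = 0 := by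
    rwa [← isUnit_map_iff φ, PowerSeries.isUnit_iff_constantCoeff, isUnit_iff_ne_zero,
      not_not] at hG
  have hx : ¬IsUnit (PowerSeries.C PowerSeries.X : k⟦X⟧⟦X⟧) := by
    simp [PowerSeries.isUnit_iff_constantCoeff]
  rw [order_eq_order_derivative_add_one (hconst hP), derivative_apply_algHom,
    (hφ.eq_zero_iff_dvd _).2 hdvd, zero_mul, add_zero, PowerSeries.order_mul, add_assoc,
    ← order_eq_order_derivative_add_one (hconst hx), hφ.order_x]

variable [IsAlgClosed k]

theorem intersectionNumber_eq_add_of_dvd_derivative (hP : ¬IsUnit P) {H : k⟦X⟧⟦X⟧}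
    (hH0 : H.map PowerSeries.constantCoeff ≠ 0) (hdvd : H ∣ PowerSeries.derivative k⟦X⟧ P)
    (hcoprime : IsRelPrime H P) :
    intersectionNumber k H P =
      intersectionNumber k H (derivativeX P) + (H.map PowerSeries.constantCoeff).order := by
  induction H using WfDvdMonoid.induction_on_irreducible with
  | zero => exact absurd (map_zero _) hH0
  | unit u hu =>
    rw [intersectionNumber_isUnit k hu, intersectionNumber_isUnit k hu,
      PowerSeries.order_zero_of_unit (hu.map _), add_zero]
  | mul H h _ hh ih =>
    rw [map_mul] at hH0
    obtain ⟨φ, hφ⟩ := exists_isMilnorParametrization hh (left_ne_zero_of_mul hH0)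
    have horder := hφ.order_apply_eq hP (dvd_of_mul_right_dvd hdvd)
    have hhP : ¬h ∣ P := fun hd ↦
      hh.not_isUnit (hcoprime (dvd_mul_right h H) hd)
    have hhdx : ¬h ∣ derivativeX P := fun hd ↦ hhP <| by
      rw [(hφ.eq_zero_iff_dvd _).2 hd, PowerSeries.order_zero, top_add] at horder
      exact (hφ.eq_zero_iff_dvd P).1 (PowerSeries.order_eq_top.1 horder)
    rw [intersectionNumber_mul_left hφ.prime hhP, intersectionNumber_mul_left hφ.prime hhdx,
      hφ.intersectionNumber_eq_order, hφ.intersectionNumber_eq_order, horder,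
      ih (right_ne_zero_of_mul hH0) (dvd_of_mul_left_dvd hdvd) hcoprime.of_mul_left_right, map_mul,
      PowerSeries.order_mul, add_add_add_comm]

theorem intersectionNumber_derivative_add_one (hP : ¬IsUnit P)
    (hP0 : P.map PowerSeries.constantCoeff ≠ 0)
    (hcoprime : IsRelPrime (PowerSeries.derivative k⟦X⟧ P) P) :
    intersectionNumber k (PowerSeries.derivative k⟦X⟧ P) P + 1 =
      intersectionNumber k (derivativeX P) (PowerSeries.derivative k⟦X⟧ P) +
        (P.map PowerSeries.constantCoeff).order := by
  have horder : (P.map PowerSeries.constantCoeff).order =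
      ((PowerSeries.derivative k⟦X⟧ P).map PowerSeries.constantCoeff).order + 1 := by
    rw [map_derivative]
    refine order_eq_order_derivative_add_one ?_
    rw [PowerSeries.isUnit_iff_constantCoeff, PowerSeries.isUnit_iff_constantCoeff,
      isUnit_iff_ne_zero, not_not] at hP
    exact hP
  have hderiv0 : (PowerSeries.derivative k⟦X⟧ P).map PowerSeries.constantCoeff ≠ 0 := by
    refine fun h ↦ hP0 ?_
    rwa [h, PowerSeries.order_zero, top_add, PowerSeries.order_eq_top] at horder
  rw [intersectionNumber_eq_add_of_dvd_derivative hP hderiv0 dvd_rfl hcoprime, horder, add_assoc,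
    intersectionNumber_comm k _ (derivativeX P)]

end Teissier

theorem intersectionNumber_prod_left {k T ι : Type*} [Field k] [CommRing T] [IsDomain T]
    [Algebra k T] {w : ι → T} {s : Finset ι} (hw : ∀ i ∈ s, Prime (w i)) {G : T}
    (hG : ∀ i ∈ s, ¬w i ∣ G) :
    intersectionNumber k (∏ i ∈ s, w i) G = ∑ i ∈ s, intersectionNumber k (w i) G := by
  classical
  induction s using Finset.induction_on with
  | empty => rw [Finset.prod_empty, Finset.sum_empty, intersectionNumber_isUnit k isUnit_one]
  | insert a s ha ih =>
    rw [Finset.forall_mem_insert] at hw hG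
    rw [Finset.prod_insert ha, Finset.sum_insert ha, intersectionNumber_mul_left hw.1 hG.1,
      ih hw.2 hG.2]

section Milnor

variable {k : Type*} [Field k] {ι : Type*} [Fintype ι]
  {φ : ι → k⟦X⟧⟦X⟧ →ₐ[k] k⟦X⟧} {g : ι → k⟦X⟧⟦X⟧} {F : k⟦X⟧⟦X⟧}

theorem order_apply_derivative_add_one [DecidableEq ι]
    (hφ : ∀ i, IsMilnorParametrization (φ i) (g i))
    (hF : Associated (∏ i, g i) F) (i : ι) :
    (φ i (PowerSeries.derivative k⟦X⟧ F)).order + 1 =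
      2 * delta (φ i) + ∑ j ∈ Finset.univ.erase i, (φ i (g j)).order +
        ((g i).map PowerSeries.constantCoeff).order := by
  have hzero : φ i (∏ j, g j) = 0 :=
    ((hφ i).eq_zero_iff_dvd _).2 (Finset.dvd_prod_of_mem g (Finset.mem_univ i))
  rw [order_apply_derivative_of_associated hzero hF,
    ← Finset.mul_prod_erase _ g (Finset.mem_univ i), derivative_mul, map_add, map_mul,
    map_mul, (hφ i).apply_self, zero_mul, zero_add,
    PowerSeries.order_mul, map_prod, PowerSeries.order_prod, add_assoc,
    (hφ i).order_derivative_add_one]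
  ring

theorem not_dvd_derivative (hφ : ∀ i, IsMilnorParametrization (φ i) (g i))
    (hdvd : Pairwise fun i j ↦ ¬g i ∣ g j) (hF : Associated (∏ i, g i) F)
    (hF0 : F.map PowerSeries.constantCoeff ≠ 0) (i : ι) :
    ¬g i ∣ PowerSeries.derivative k⟦X⟧ F := fun h ↦ by
  classical
  have horder := order_apply_derivative_add_one hφ hF i
  have hg0 : ((g i).map PowerSeries.constantCoeff).order ≠ ⊤ := by
    rw [PowerSeries.order_eq_top.ne]
    intro hgi
    obtain ⟨c, hc⟩ := (Finset.dvd_prod_of_mem g (Finset.mem_univ i)).trans hF.dvd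
    rw [hc, map_mul, hgi, zero_mul] at hF0
    exact hF0 rfl
  rw [((hφ i).eq_zero_iff_dvd _).2 h, PowerSeries.order_zero, top_add] at horder
  exact WithTop.add_ne_top.2 ⟨two_mul_delta_add_sum_order_ne_top (hφ i).toIsParametrization hdvd,
    hg0⟩ horder.symm

theorem intersectionNumber_derivative_add_card (hφ : ∀ i, IsMilnorParametrization (φ i) (g i))
    (hdvd : Pairwise fun i j ↦ ¬g i ∣ g j) (hF : Associated (∏ i, g i) F)
    (hF0 : F.map PowerSeries.constantCoeff ≠ 0) :
    intersectionNumber k F (PowerSeries.derivative k⟦X⟧ F) + Fintype.card ι =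
      2 * delta (AlgHom.pi φ) + (F.map PowerSeries.constantCoeff).order := by
  classical
  have horder : (F.map PowerSeries.constantCoeff).order =
      ∑ i, ((g i).map PowerSeries.constantCoeff).order := by
    rw [← PowerSeries.order_prod, ← map_prod, order_map_eq_of_associated hF]
  calc
    _ = ∑ i, ((φ i (PowerSeries.derivative k⟦X⟧ F)).order + 1) := by
      rw [← intersectionNumber_eq_of_associated k hF, intersectionNumber_prod_left
        (fun i _ ↦ (hφ i).prime) fun i _ ↦ not_dvd_derivative hφ hdvd hF hF0 i,
        Finset.sum_add_distrib, Finset.sum_congr rfl fun i _ ↦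
        (hφ i).intersectionNumber_eq_order (PowerSeries.derivative k⟦X⟧ F)]
      simp
    _ = _ := by
      rw [Finset.sum_congr rfl fun i _ ↦ order_apply_derivative_add_one hφ hF i,
        Finset.sum_add_distrib, ← horder,
        two_mul_delta_pi (fun i ↦ (hφ i).toIsParametrization) hdvd]

theorem isRelPrime_derivative (hφ : ∀ i, IsMilnorParametrization (φ i) (g i))
    (hdvd : Pairwise fun i j ↦ ¬g i ∣ g j) (hF : Associated (∏ i, g i) F)
    (hF0 : F.map PowerSeries.constantCoeff ≠ 0) :
    IsRelPrime (PowerSeries.derivative k⟦X⟧ F) F := by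
  refine (IsRelPrime.prod_right fun i _ ↦ IsRelPrime.symm ?_).of_dvd_right hF.dvd'
  exact (hφ i).prime.irreducible.isRelPrime_iff_not_dvd.2 (not_dvd_derivative hφ hdvd hF hF0 i)

theorem intersectionNumber_partial_derivatives_add_card [IsAlgClosed k] [CharZero k]
    (hφ : ∀ i, IsMilnorParametrization (φ i) (g i)) (hdvd : Pairwise fun i j ↦ ¬g i ∣ g j)
    (hF : Associated (∏ i, g i) F) (hFunit : ¬IsUnit F)
    (hF0 : F.map PowerSeries.constantCoeff ≠ 0) :
    intersectionNumber k (derivativeX F) (PowerSeries.derivative k⟦X⟧ F) + Fintype.card ι =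
      2 * delta (AlgHom.pi φ) + 1 := by
  have hpolar := intersectionNumber_derivative_add_card hφ hdvd hF hF0
  have hteissier := intersectionNumber_derivative_add_one hFunit hF0
    (isRelPrime_derivative hφ hdvd hF hF0)
  refine ENat.add_left_injective_of_ne_top (PowerSeries.order_eq_top.not.2 hF0) ?_
  dsimp only
  rw [add_right_comm, ← hteissier, intersectionNumber_comm, add_right_comm, hpolar, add_right_comm]

end Milnor

/-! ### Normalization -/

theorem finite_quotient_of_colength_ne_top {k R M : Type*} [Field k] [Ring R] [AddCommGroup M]
    [Module k M] [Module R M] [SMul k R] [IsScalarTower k R M] {N : Submodule R M}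
    (hN : colength k N ≠ ⊤) : Module.Finite k (M ⧸ N) := by
  have := (isFiniteLength_iff_isNoetherian_isArtinian.1 (Module.length_ne_top_iff.1 hN)).1
  infer_instance

theorem finrank_quotient_eq_colength {k R M : Type*} [Field k] [Ring R] [AddCommGroup M]
    [Module k M] [Module R M] [SMul k R] [IsScalarTower k R M] {N : Submodule R M}
    (hN : colength k N ≠ ⊤) : (Module.finrank k (M ⧸ N) : ℕ∞) = colength k N := by
  have := finite_quotient_of_colength_ne_top hN
  exact (Module.length_eq_finrank k (M ⧸ N)).symm

section Conductor

variable {R S : Type*} [CommRing R] [CommRing S] [Algebra R S] [FaithfulSMul R S] {d : R}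

theorem algebraMap_mem_nonZeroDivisors_iff_of_conductor
    (hd : algebraMap R S d ∈ nonZeroDivisors S)
    (hdS : ∀ z : S, ∃ r : R, algebraMap R S r = d • z) (s : R) :
    algebraMap R S s ∈ nonZeroDivisors S ↔ s ∈ nonZeroDivisors R := by
  refine ⟨fun hs ↦ mem_nonZeroDivisors_iff_right.2 fun t ht ↦ ?_,
    fun hs ↦ mem_nonZeroDivisors_iff_right.2 fun z hz ↦ ?_⟩
  · rw [← FaithfulSMul.algebraMap_eq_zero_iff R S]
    exact (mem_nonZeroDivisors_iff_right.1 hs) _ (by rw [← map_mul, ht, map_zero])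
  · obtain ⟨t, ht⟩ := hdS z
    have hts : t * s = 0 := by
      rw [← FaithfulSMul.algebraMap_eq_zero_iff R S, map_mul, ht, smul_mul_assoc, hz, smul_zero]
    rw [(mem_nonZeroDivisors_iff_right.1 hs) t hts, map_zero, Algebra.smul_def] at ht
    exact (mem_nonZeroDivisors_iff.1 hd).1 z ht.symm

theorem isFractionRing_of_conductor (hd : algebraMap R S d ∈ nonZeroDivisors S)
    (hdS : ∀ z : S, ∃ r : R, algebraMap R S r = d • z) (L : Type*) [CommRing L] [Algebra S L]
    [IsFractionRing S L] [Algebra R L] [IsScalarTower R S L] : IsFractionRing R L where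
  map_units s := by
    rw [IsScalarTower.algebraMap_apply R S L]
    exact IsLocalization.map_units L
      ⟨_, (algebraMap_mem_nonZeroDivisors_iff_of_conductor hd hdS s).2 s.2⟩
  surj z := by
    obtain ⟨⟨a, b⟩, hab⟩ := IsLocalization.surj (nonZeroDivisors S) z
    obtain ⟨r, hr⟩ := hdS a
    obtain ⟨s, hs⟩ := hdS b
    have hs0 : s ∈ nonZeroDivisors R := by
      rw [← algebraMap_mem_nonZeroDivisors_iff_of_conductor hd hdS, hs, Algebra.smul_def]
      exact mul_mem hd b.2
    refine ⟨(r, ⟨s, hs0⟩), ?_⟩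
    simp only [IsScalarTower.algebraMap_apply R S L, hr, hs, Algebra.smul_def, map_mul] at hab ⊢
    rw [← hab, mul_left_comm]
  exists_of_eq {s t} h := by
    rw [IsScalarTower.algebraMap_apply R S L, IsScalarTower.algebraMap_apply R S L] at h
    exact ⟨1, by rw [FaithfulSMul.algebraMap_injective R S (IsFractionRing.injective S L h)]⟩

end Conductor

section FiniteColength

variable {k R S : Type*} [Field k] [CommRing R] [Algebra k R] [CommRing S] [Algebra k S]
  [Algebra R S] [IsScalarTower k R S]

theorem isIntegral_of_colength_ne_top (h : colength k (Algebra.linearMap R S).range ≠ ⊤) :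
    Algebra.IsIntegral R S := by
  have hquot := finite_quotient_of_colength_ne_top h
  have : Module.Finite R (S ⧸ (Algebra.linearMap R S).range) :=
    Module.Finite.of_restrictScalars_finite k R _
  have : Module.Finite R S := Module.Finite.of_submodule_quotient (Algebra.linearMap R S).range
  infer_instance

/- The minimal polynomial of multiplication by `x` on the finite-dimensional quotient `S / R`,
evaluated at `x`, lies in the conductor. -/
theorem exists_conductor (h : colength k (Algebra.linearMap R S).range ≠ ⊤) {x : R}
    (hx : ∀ p : k[X], p ≠ 0 → algebraMap R S (Polynomial.aeval x p) ∈ nonZeroDivisors S) :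
    ∃ d : R, algebraMap R S d ∈ nonZeroDivisors S ∧
      ∀ z : S, ∃ r : R, algebraMap R S r = d • z := by
  have := finite_quotient_of_colength_ne_top h
  let mulX := Algebra.lsmul k k (S ⧸ (Algebra.linearMap R S).range) x
  have hzero : Algebra.lsmul k k (S ⧸ (Algebra.linearMap R S).range)
      (Polynomial.aeval x (minpoly k mulX)) = 0 := by
    rw [← Polynomial.aeval_algHom_apply, minpoly.aeval]
  refine ⟨Polynomial.aeval x (minpoly k mulX),
    hx _ (minpoly.ne_zero (Algebra.IsIntegral.isIntegral mulX)), fun z ↦ ?_⟩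
  exact (Submodule.Quotient.mk_eq_zero _).1 (LinearMap.congr_fun hzero (Submodule.Quotient.mk z))

theorem colength_range_linearMap_integralClosure [FaithfulSMul R S]
    (h : colength k (Algebra.linearMap R S).range ≠ ⊤) {x : R}
    (hx : ∀ p : k[X], p ≠ 0 → algebraMap R S (Polynomial.aeval x p) ∈ nonZeroDivisors S)
    (L : Type*) [CommRing L] [Algebra S L] [IsFractionRing S L] [IsIntegrallyClosedIn S L]
    (K : Type*) [CommRing K] [Algebra R K] [IsFractionRing R K] [Algebra k K]
    [IsScalarTower k R K] :
    colength k (Algebra.linearMap R (integralClosure R K)).range =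
      colength k (Algebra.linearMap R S).range := by
  obtain ⟨d, hd, hdS⟩ := exists_conductor h hx
  let _ : Algebra R L := Algebra.compHom L (algebraMap R S)
  have : IsScalarTower R S L := .of_algebraMap_eq fun _ ↦ rfl
  have := isFractionRing_of_conductor hd hdS L
  have := isIntegral_of_colength_ne_top h
  have : IsIntegralClosure S R L := IsIntegralClosure.of_isIntegrallyClosedIn
  let e : S ≃ₐ[R] integralClosure R K := (IsIntegralClosure.equiv R S L (integralClosure R L)).trans
    (IsLocalization.algEquiv (nonZeroDivisors R) L K).mapIntegralClosure
  have hcomap : ((Algebra.linearMap R (integralClosure R K)).range.restrictScalars k).comap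
      (e.toLinearMap.restrictScalars k) = (Algebra.linearMap R S).range.restrictScalars k := by
    ext z
    refine exists_congr fun r ↦ ?_
    rw [Algebra.linearMap_apply, Algebra.linearMap_apply, ← e.commutes]
    exact e.injective.eq_iff
  rw [← colength_restrictScalars, ← colength_restrictScalars k (Algebra.linearMap R S).range,
    ← hcomap]
  exact (colength_comap_of_surjective e.surjective _).symm

end FiniteColength

section Pi

variable {ι : Type*} {S L : ι → Type*} [∀ i, CommRing (S i)] [∀ i, CommRing (L i)]
  [∀ i, Algebra (S i) (L i)]

theorem nonZeroDivisors_pi :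
    nonZeroDivisors (∀ i, S i) = .pi .univ fun i ↦ nonZeroDivisors (S i) := by
  classical
  ext s
  simp only [mem_nonZeroDivisors_iff_right, Submonoid.mem_pi, Set.mem_univ, true_imp_iff]
  refine ⟨fun hs i x hx ↦ ?_, fun hs x hx ↦ funext fun i ↦ hs i _ (congrFun hx i)⟩
  have hsingle : Pi.single i x * s = 0 := by rw [← Pi.single_mul_left, hx, Pi.single_zero]
  simpa using congrFun (hs _ hsingle) i

instance isFractionRing_pi [∀ i, IsFractionRing (S i) (L i)] :
    IsFractionRing (∀ i, S i) (∀ i, L i) := by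
  rw [IsFractionRing, nonZeroDivisors_pi]
  infer_instance

instance isIntegrallyClosedIn_pi [∀ i, IsIntegrallyClosedIn (S i) (L i)] :
    IsIntegrallyClosedIn (∀ i, S i) (∀ i, L i) := by
  refine isIntegrallyClosedIn_iff.2 ⟨fun s t h ↦ funext fun i ↦
    IsIntegralClosure.algebraMap_injective (S i) (S i) (L i) (congrFun h i), fun {z} hz ↦ ?_⟩
  choose s hs using fun i ↦ IsIntegrallyClosedIn.isIntegral_iff.1
    (hz.map_of_comp_eq (Pi.evalRingHom S i) (Pi.evalRingHom L i) rfl)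
  exact ⟨s, funext hs⟩

end Pi

theorem transcendental_of_not_isUnit {k A : Type*} [Field k] [CommRing A] [IsDomain A] [Algebra k A]
    {a : A} (ha0 : a ≠ 0) (ha : ¬IsUnit a) : Transcendental k a :=
  fun halg ↦ ha (halg.isIntegral.isUnit ha0)

theorem colength_range_linearMap_integralClosure_eq_delta {k R ι : Type*} [Field k] [CommRing R]
    [Algebra k R] {φ : R →ₐ[k] ι → k⟦X⟧} (hφ : Function.Injective φ) (hdelta : delta φ ≠ ⊤) {x : R}
    (hx : ∀ i, Transcendental k (φ x i)) (K : Type*) [CommRing K] [Algebra R K]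
    [IsFractionRing R K] [Algebra k K] [IsScalarTower k R K] :
    colength k (Algebra.linearMap R (integralClosure R K)).range = delta φ := by
  let _ : Algebra R (ι → k⟦X⟧) := φ.toRingHom.toAlgebra
  have : IsScalarTower k R (ι → k⟦X⟧) := .of_algebraMap_eq fun c ↦ (φ.commutes c).symm
  have : FaithfulSMul R (ι → k⟦X⟧) := (faithfulSMul_iff_algebraMap_injective R _).2 hφ
  have hrange : colength k (Algebra.linearMap R (ι → k⟦X⟧)).range = delta φ :=
    (colength_restrictScalars k _).symm
  have hnzd (p : k[X]) (hp : p ≠ 0) :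
      φ (Polynomial.aeval x p) ∈ nonZeroDivisors (ι → k⟦X⟧) := by
    rw [nonZeroDivisors_pi]
    intro i _
    rw [← Polynomial.aeval_algHom_apply, Polynomial.aeval_pi_apply]
    exact mem_nonZeroDivisors_of_ne_zero (mt (transcendental_iff.1 (hx i) p) hp)
  rw [colength_range_linearMap_integralClosure (hrange ▸ hdelta) hnzd
    (ι → FractionRing k⟦X⟧) K, hrange]

/-! ### Generic linear coordinates -/

theorem exists_not_dvd_of_infinite {ι T : Type*} [Infinite ι] [CommMonoidWithZero T]
    [UniqueFactorizationMonoid T] {p : ι → T} (hp : ∀ i, Irreducible (p i))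
    (hdvd : Pairwise fun i j ↦ ¬p i ∣ p j) {a : T} (ha : a ≠ 0) : ∃ i, ¬p i ∣ a := by
  by_contra! h
  choose q hq hpq using fun i ↦ UniqueFactorizationMonoid.exists_mem_factors_of_dvd ha (hp i) (h i)
  obtain ⟨i, -, j, -, hij, hqij⟩ := Set.infinite_univ.exists_ne_map_eq_of_mapsTo
    (fun i _ ↦ hq i) (Multiset.finite_toSet (UniqueFactorizationMonoid.factors a))
  exact hdvd hij ((hpq i).trans (hqij ▸ (hpq j).symm)).dvd

section LinearCoordinates

variable {k : Type*} [Field k]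

theorem C_X_dvd_iff {G : k⟦X⟧⟦X⟧} :
    PowerSeries.C PowerSeries.X ∣ G ↔ G.map PowerSeries.constantCoeff = 0 := by
  refine ⟨?_, fun h ↦ ?_⟩
  · rintro ⟨H, rfl⟩
    rw [map_mul, PowerSeries.map_C, PowerSeries.constantCoeff_X, map_zero, zero_mul]
  · choose H hH using fun n ↦ PowerSeries.X_dvd_iff.2
      ((PowerSeries.coeff_map PowerSeries.constantCoeff n G).symm.trans (PowerSeries.ext_iff.1 h n))
    exact ⟨PowerSeries.mk H, PowerSeries.ext fun n ↦ by
      rw [PowerSeries.coeff_C_mul, PowerSeries.coeff_mk, hH]⟩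

theorem prime_C_X : Prime (PowerSeries.C PowerSeries.X : k⟦X⟧⟦X⟧) := by
  refine ⟨mt (map_eq_zero_iff _ PowerSeries.C_injective).1 PowerSeries.X_ne_zero,
    by simp [PowerSeries.isUnit_iff_constantCoeff], fun G H h ↦ ?_⟩
  simpa only [C_X_dvd_iff, map_mul, mul_eq_zero] using h

/-- The substitution `(x + c y, y)` of the shear `(x, y) ↦ (x + c y, y)`. -/
noncomputable def shearVars (c : k) : Fin 2 → MvPowerSeries (Fin 2) k :=
  ![MvPowerSeries.X 0 + c • MvPowerSeries.X 1, MvPowerSeries.X 1]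

theorem hasSubst_shearVars (c : k) : MvPowerSeries.HasSubst (shearVars c) :=
  MvPowerSeries.hasSubst_of_constantCoeff_zero fun i ↦ by
    fin_cases i <;> simp [shearVars, MvPowerSeries.smul_eq_C_mul]

/-- The endomorphism `F (x, y) ↦ F (x + c y, y)` of `k⟦x, y⟧`. -/
noncomputable def shear (c : k) : MvPowerSeries (Fin 2) k →ₐ[k] MvPowerSeries (Fin 2) k :=
  MvPowerSeries.substAlgHom (hasSubst_shearVars c)

theorem shear_X (c : k) (i : Fin 2) : shear c (MvPowerSeries.X i) = shearVars c i :=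
  MvPowerSeries.substAlgHom_X _ i

theorem shear_neg_comp_shear (c : k) : (shear (-c)).comp (shear c) = AlgHom.id k _ := by
  have hX : (fun i ↦ shear (-c) (shearVars c i)) = MvPowerSeries.X := by
    ext1 i
    fin_cases i <;> simp [shearVars, shear_X]
  ext1 F
  rw [AlgHom.comp_apply, shear, shear, MvPowerSeries.substAlgHom_comp_substAlgHom_apply,
    MvPowerSeries.coe_substAlgHom]
  exact (congrArg (MvPowerSeries.subst · F) hX).trans (congrFun MvPowerSeries.subst_self F)

/-- The shear as an automorphism of `k⟦x, y⟧`. -/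
noncomputable def shearEquiv (c : k) : MvPowerSeries (Fin 2) k ≃ₐ[k] MvPowerSeries (Fin 2) k :=
  AlgEquiv.ofAlgHom (shear c) (shear (-c)) (by simpa using shear_neg_comp_shear (-c))
    (shear_neg_comp_shear c)

/-- The isomorphism of `k⟦x, y⟧` with the iterated power series ring `k⟦x⟧⟦y⟧` in the linear
coordinates given by `F (x, y) ↦ F (x + c y, y)`. -/
noncomputable def coordinates (c : k) : MvPowerSeries (Fin 2) k ≃ₐ[k] k⟦X⟧⟦X⟧ :=
  ((shearEquiv c).trans (MvPowerSeries.renameEquiv k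
    ((finSuccEquiv' 1).trans (Equiv.optionCongr (Equiv.ofUnique (Fin 1) Unit))))).trans
    (MvPowerSeries.optionEquivLeft Unit k)

theorem coordinates_X_one (c : k) : coordinates c (MvPowerSeries.X 1) = PowerSeries.X := by
  simp [coordinates, shearEquiv, shear_X, shearVars]

theorem coordinates_X_zero (c : k) : coordinates c (MvPowerSeries.X 0) =
    PowerSeries.C PowerSeries.X + c • PowerSeries.X := by
  have hzero : finSuccEquiv' (1 : Fin 2) 0 = some 0 := by decide
  simp [coordinates, shearEquiv, shear_X, shearVars, hzero, PowerSeries.X]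

theorem coordinates_symm_X (c : k) :
    (coordinates c).symm PowerSeries.X = MvPowerSeries.X 1 := by
  rw [AlgEquiv.symm_apply_eq, coordinates_X_one]

theorem coordinates_symm_C_X (c : k) : (coordinates c).symm (PowerSeries.C PowerSeries.X) =
    MvPowerSeries.X 0 - c • MvPowerSeries.X 1 := by
  rw [AlgEquiv.symm_apply_eq, map_sub, map_smul, coordinates_X_zero, coordinates_X_one,
    add_sub_cancel_right]

theorem coordinates_derivation (c : k)
    (D : Derivation k (MvPowerSeries (Fin 2) k) (MvPowerSeries (Fin 2) k))
    (F : MvPowerSeries (Fin 2) k) :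
    coordinates c (D F) = derivativeX (coordinates c F) *
        coordinates c (D (MvPowerSeries.X 0 - c • MvPowerSeries.X 1)) +
      PowerSeries.derivative k⟦X⟧ (coordinates c F) * coordinates c (D (MvPowerSeries.X 1)) := by
  have : IsLocalHom (AlgHom.id k k⟦X⟧⟦X⟧) := ⟨fun _ h ↦ h⟩
  have h := leibniz_eq_partial_derivatives (AlgHom.id k k⟦X⟧⟦X⟧)
    ((coordinates c).toLinearMap ∘ₗ D.toLinearMap ∘ₗ (coordinates c).symm.toLinearMap)
    (fun G H ↦ by simp) (coordinates c F)
  simpa [coordinates_symm_X, coordinates_symm_C_X] using h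

theorem intersectionNumber_coordinates_partial_derivatives (c : k) (F : MvPowerSeries (Fin 2) k) :
    intersectionNumber k (derivativeX (coordinates c F))
        (PowerSeries.derivative k⟦X⟧ (coordinates c F)) =
      intersectionNumber k (MvPowerSeries.pderiv k 0 F) (MvPowerSeries.pderiv k 1 F) := by
  have hx : coordinates c (MvPowerSeries.pderiv k 0 F) = derivativeX (coordinates c F) := by
    rw [coordinates_derivation]
    simp [MvPowerSeries.pderiv_X_of_ne]
  have hy : coordinates c (MvPowerSeries.pderiv k 1 F) =
      PowerSeries.derivative k⟦X⟧ (coordinates c F) +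
        algebraMap k k⟦X⟧⟦X⟧ (-c) * derivativeX (coordinates c F) := by
    rw [coordinates_derivation]
    rw [map_sub, Derivation.map_smul, MvPowerSeries.pderiv_X_of_ne zero_ne_one,
      MvPowerSeries.pderiv_X_self, zero_sub, map_neg, map_smul, map_one, Algebra.smul_def, map_neg]
    ring
  rw [← intersectionNumber_map (coordinates c), hx, hy, intersectionNumber,
    intersectionNumber, Ideal.span_pair_add_mul_left]

theorem not_X_sub_smul_X_dvd {a b : k} (hab : a ≠ b) :
    ¬(MvPowerSeries.X 0 - a • MvPowerSeries.X 1 : MvPowerSeries (Fin 2) k) ∣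
      MvPowerSeries.X 0 - b • MvPowerSeries.X 1 := by
  rw [← coordinates_symm_C_X, ← map_dvd_iff (coordinates a), AlgEquiv.apply_symm_apply, map_sub,
    map_smul, coordinates_X_zero, coordinates_X_one, add_sub_assoc, ← sub_smul,
    dvd_add_right dvd_rfl, C_X_dvd_iff, Algebra.smul_def, algebraMap_eq_C_C]
  simpa [sub_eq_zero, PowerSeries.C_injective.eq_iff] using hab

theorem exists_map_coordinates_ne_zero [Infinite k] {F : MvPowerSeries (Fin 2) k} (hF : F ≠ 0) :
    ∃ c : k, (coordinates c F).map PowerSeries.constantCoeff ≠ 0 := by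
  have : UniqueFactorizationMonoid (MvPowerSeries (Fin 2) k) :=
    (coordinates (0 : k)).symm.toMulEquiv.uniqueFactorizationMonoid inferInstance
  have hirr (c : k) : Irreducible
      (MvPowerSeries.X 0 - c • MvPowerSeries.X 1 : MvPowerSeries (Fin 2) k) := by
    rw [← coordinates_symm_C_X, MulEquiv.irreducible_iff]
    exact prime_C_X.irreducible
  obtain ⟨c, hc⟩ := exists_not_dvd_of_infinite hirr (fun _ _ ↦ not_X_sub_smul_X_dvd) hF
  refine ⟨c, fun h ↦ hc ?_⟩
  rwa [← C_X_dvd_iff, ← map_dvd_iff (coordinates c).symm, AlgEquiv.symm_apply_apply,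
    coordinates_symm_C_X] at h

end LinearCoordinates

/-! ### Milnor's formula -/

theorem delta_comp_of_surjective {k T S U : Type*} [CommRing k] [CommRing T] [Algebra k T]
    [CommRing S] [Algebra k S] [CommRing U] [Algebra k U] (φ : S →ₐ[k] U) {π : T →ₐ[k] S}
    (hπ : Function.Surjective π) : delta (φ.comp π) = delta φ := by
  rw [delta, delta, AlgHom.comp_toLinearMap,
    LinearMap.range_comp_of_range_eq_top _ (LinearMap.range_eq_top.2 hπ)]

theorem colength_range_linearMap_integralClosure_eq_delta_pi {k T R ι : Type*} [Field k]
    [CommRing T] [Algebra k T] [CommRing R] [Algebra k R] [Fintype ι] {φ : ι → T →ₐ[k] k⟦X⟧}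
    {w : ι → T} (hφ : ∀ i, IsParametrization (φ i) (w i)) (hdvd : Pairwise fun i j ↦ ¬w i ∣ w j)
    {x : T} (hx : ∀ i, Transcendental k (φ i x)) {π : T →ₐ[k] R} (hπ : Function.Surjective π)
    (hker : RingHom.ker π = Ideal.span {∏ i, w i}) (K : Type*) [CommRing K] [Algebra R K]
    [IsFractionRing R K] [Algebra k K] [IsScalarTower k R K] :
    colength k (Algebra.linearMap R (integralClosure R K)).range = delta (AlgHom.pi φ) := by
  have hker_pi : RingHom.ker π = RingHom.ker (AlgHom.pi φ) := by
    ext G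
    rw [hker, Ideal.mem_span_singleton, prod_dvd_iff_of_pairwise_not_dvd
      (fun i _ ↦ (hφ i).prime) (hdvd.set_pairwise _)]
    simp [RingHom.mem_ker, funext_iff, (hφ _).eq_zero_iff_dvd]
  let ψ : R →ₐ[k] ι → k⟦X⟧ := AlgHom.liftOfSurjective π hπ (AlgHom.pi φ) hker_pi.le
  have hψπ : ψ.comp π = AlgHom.pi φ := AlgHom.liftOfSurjective_comp π hπ _ _
  have hψ : Function.Injective ψ := by
    refine (injective_iff_map_eq_zero ψ).2 fun r hr ↦ ?_
    obtain ⟨G, rfl⟩ := hπ r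
    rwa [← AlgHom.comp_apply, hψπ, ← RingHom.mem_ker, ← hker_pi] at hr
  have hdelta : delta ψ = delta (AlgHom.pi φ) := by
    rw [← hψπ, delta_comp_of_surjective ψ hπ]
  have hψx (i : ι) : Transcendental k (ψ (π x) i) := by
    rw [← AlgHom.comp_apply, hψπ]
    exact hx i
  rw [colength_range_linearMap_integralClosure_eq_delta hψ
    (hdelta ▸ delta_pi_ne_top hφ hdvd) hψx K, hdelta]

section Milnor

variable {k : Type*} [Field k]

theorem IsMilnorParametrization.transcendental {φ : k⟦X⟧⟦X⟧ →ₐ[k] k⟦X⟧} {w : k⟦X⟧⟦X⟧}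
    (h : IsMilnorParametrization φ w) (hw0 : w.map PowerSeries.constantCoeff ≠ 0) :
    Transcendental k (φ (PowerSeries.C PowerSeries.X)) := by
  refine transcendental_of_not_isUnit (fun hzero ↦ hw0 ?_) ?_
  · rw [← PowerSeries.order_eq_top, ← h.order_x, hzero, PowerSeries.order_zero]
  · rw [isUnit_map_iff]
    exact prime_C_X.not_isUnit

variable [IsAlgClosed k] [CharZero k] {ι : Type*} [Fintype ι]

theorem intersectionNumber_partial_derivatives_add_card_eq [Nonempty ι] {g : ι → k⟦X⟧⟦X⟧}
    (hirr : ∀ i, Irreducible (g i)) (hdvd : Pairwise fun i j ↦ ¬g i ∣ g j) {F : k⟦X⟧⟦X⟧}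
    (hF : Associated (∏ i, g i) F) (hF0 : F.map PowerSeries.constantCoeff ≠ 0) {R : Type*}
    [CommRing R] [Algebra k R] {π : k⟦X⟧⟦X⟧ →ₐ[k] R} (hπ : Function.Surjective π)
    (hker : RingHom.ker π = Ideal.span {F}) (K : Type*) [CommRing K] [Algebra R K]
    [IsFractionRing R K] [Algebra k K] [IsScalarTower k R K] :
    colength k (Algebra.linearMap R (integralClosure R K)).range ≠ ⊤ ∧
    intersectionNumber k (derivativeX F) (PowerSeries.derivative k⟦X⟧ F) + Fintype.card ι =
      2 * colength k (Algebra.linearMap R (integralClosure R K)).range + 1 := by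
  have hdvdF (i : ι) : g i ∣ F := (Finset.dvd_prod_of_mem g (Finset.mem_univ i)).trans hF.dvd
  have hg0 (i : ι) : (g i).map PowerSeries.constantCoeff ≠ 0 :=
    ne_zero_of_dvd_ne_zero hF0 (map_dvd _ (hdvdF i))
  have hFunit : ¬IsUnit F := fun h ↦
    (hirr (Classical.arbitrary ι)).not_isUnit (isUnit_of_dvd_unit (hdvdF _) h)
  choose φ hφ using fun i ↦ exists_isMilnorParametrization (hirr i) (hg0 i)
  have hφ' (i : ι) : IsParametrization (φ i) (g i) := (hφ i).toIsParametrization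
  rw [colength_range_linearMap_integralClosure_eq_delta_pi hφ' hdvd
    (fun i ↦ (hφ i).transcendental (hg0 i)) hπ
    (hker.trans (Ideal.span_singleton_eq_span_singleton.2 hF.symm)) K]
  exact ⟨delta_pi_ne_top hφ' hdvd,
    intersectionNumber_partial_derivatives_add_card hφ hdvd hF hFunit hF0⟩

end Milnor

end PlaneCurve

open PlaneCurve in
theorem milnor_formula_general {k ι R : Type*} [Field k] [IsAlgClosed k] [CharZero k] [Fintype ι]
    [Nonempty ι] [CommRing R] [Algebra k R] {F : MvPowerSeries (Fin 2) k}
    {g : ι → MvPowerSeries (Fin 2) k} (hirr : ∀ i, Irreducible (g i))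
    (hna : ∀ i j, i ≠ j → ¬Associated (g i) (g j)) (hF : Associated (∏ i, g i) F)
    (π : MvPowerSeries (Fin 2) k →ₐ[k] R) (hπ : Function.Surjective π)
    (hker : RingHom.ker π = Ideal.span {F}) (K : Type*) [CommRing K] [Algebra R K]
    [IsFractionRing R K] [Algebra k K] [IsScalarTower k R K] :
    Module.finrank k (MvPowerSeries (Fin 2) k ⧸
        Ideal.span {MvPowerSeries.pderiv k 0 F, MvPowerSeries.pderiv k 1 F}) + Fintype.card ι =
      2 * Module.finrank k
        (integralClosure R K ⧸ (Algebra.linearMap R (integralClosure R K)).range) + 1 := by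
  have hF0 : F ≠ 0 := hF.ne_zero_iff.1 (Finset.prod_ne_zero_iff.2 fun i _ ↦ (hirr i).ne_zero)
  obtain ⟨c, hc⟩ := exists_map_coordinates_ne_zero hF0
  let e := coordinates c
  have hker_comp : RingHom.ker (π.comp e.symm.toAlgHom) = Ideal.span {e F} := by
    ext G
    rw [RingHom.mem_ker, AlgHom.comp_apply, ← RingHom.mem_ker, hker, Ideal.mem_span_singleton,
      Ideal.mem_span_singleton, ← map_dvd_iff e.symm, AlgEquiv.symm_apply_apply]
    rfl
  have hdvd (i j : ι) (hij : i ≠ j) : ¬e (g i) ∣ e (g j) := by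
    rw [map_dvd_iff, (hirr i).dvd_irreducible_iff_associated (hirr j)]
    exact hna i j hij
  obtain ⟨hdelta, hmilnor⟩ := intersectionNumber_partial_derivatives_add_card_eq
    (fun i ↦ (MulEquiv.irreducible_iff e).2 (hirr i)) hdvd (map_prod e g _ ▸ hF.map e) hc
    (hπ.comp e.symm.surjective) hker_comp K
  rw [intersectionNumber_coordinates_partial_derivatives] at hmilnor
  have hmu : intersectionNumber k (MvPowerSeries.pderiv k 0 F) (MvPowerSeries.pderiv k 1 F) ≠ ⊤ :=
    fun htop ↦ by
      rw [htop, top_add] at hmilnor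
      exact WithTop.add_ne_top.2 ⟨WithTop.mul_ne_top (ENat.natCast_ne_top 2) hdelta,
        ENat.one_ne_top⟩ hmilnor.symm
  rw [intersectionNumber, ← finrank_quotient_eq_colength hmu,
    ← finrank_quotient_eq_colength hdelta] at hmilnor
  exact_mod_cast hmilnor

/-- Milnor's formula `μ(f) = 2δ(f) − r + 1` (Proposition 2.4): for a polynomial `f` vanishing at
the origin whose image `F` in `ℂ[[x,y]]` is reduced with `r` irreducible (formal) factors. -/
theorem milnor_formula (f : MvPolynomial (Fin 2) ℂ) (h0 : constantCoeff f = 0)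
    (r : ℕ) (hr : 1 ≤ r) (u : (MvPowerSeries (Fin 2) ℂ)ˣ)
    (g : Fin r → MvPowerSeries (Fin 2) ℂ)
    (hirr : ∀ i, Irreducible (g i))
    (hna : ∀ i j, i ≠ j → ¬ Associated (g i) (g j))
    (hF : (↑f : MvPowerSeries (Fin 2) ℂ) = ↑u * ∏ i, g i)
    (K : Type) [CommRing K] [Algebra (CurveGermRing f) K]
    [IsFractionRing (CurveGermRing f) K] [Algebra ℂ K]
    [IsScalarTower ℂ (CurveGermRing f) K] :
    milnorNumber f + r = 2 * deltaInvariant f K + 1 := by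
  have : Nonempty (Fin r) := ⟨⟨0, hr⟩⟩
  let π : MvPowerSeries (Fin 2) ℂ →ₐ[ℂ] CurveGermRing f := Ideal.Quotient.mkₐ ℂ _
  rw [milnorNumber, deltaInvariant, ← MvPowerSeries.pderiv_coe, ← MvPowerSeries.pderiv_coe]
  simpa only [Fintype.card_fin] using
    milnor_formula_general hirr hna ⟨u, by rw [hF, mul_comm]⟩ π
      (Ideal.Quotient.mkₐ_surjective ℂ _) (Ideal.Quotient.mkₐ_ker ℂ _) K
end
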